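/- Fix a positive integer k. If c_1 < c_2 < c_3 < ... is the increasing enumeration of the cyclic numbers, then c_1^k + c_2^k + ... + c_n^k is asymptotically equivalent to n·c_n^k/(k+1) as n → ∞, i.e., the ratio of the two quantities tends to 1. -/

import Mathlib

open Filter Asymptotics Real

/-- A positive integer `n` is *cyclic* if `gcd(n, φ(n)) = 1`. -/
def IsCyclicNum (n : ℕ) : Prop := 0 < n ∧ Nat.gcd n (Nat.totient n) = 1

instance : DecidablePred IsCyclicNum := fun n =>
  decidable_of_iff (0 < n ∧ Nat.gcd n (Nat.totient n) = 1) Iff.rfl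

/-- The `n`-th cyclic number, indexed from 1: `cyclicNum 1 = 1`, `cyclicNum 2 = 2`, .... -/
noncomputable def cyclicNum (n : ℕ) : ℕ := Nat.nth IsCyclicNum (n - 1)

/-- The number of cyclic numbers less than or equal to the real number `x`. -/
noncomputable def cyclicCount (x : ℝ) : ℕ :=
  ((Finset.range (⌊x⌋₊ + 1)).filter IsCyclicNum).card

/-!
Write `y = log (log N)`. The cyclic numbers up to `N` are, up to a negligible proportion, the
numbers without prime factor below roughly `y`. On the one hand a cyclic number `n` with a prime
factor `p` has no prime factor `q ≡ 1 [MOD p]`; since the reciprocals of the primes `q ≡ 1 [MOD p]`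
up to `√N` add up to about `y / p`, a second moment argument shows that such `n` are rare as soon
as `p` is slightly smaller than `y`. On the other hand a noncyclic number is divisible by `p ^ 2`
or by `p * q` with primes `q ≡ 1 [MOD p]`, and an upper bound sieve for these `q` shows that this is
rare if all prime factors are slightly larger than `y`. By Mertens type estimates the two sifting
levels lead to asymptotically equal densities `G`, so the number of cyclic numbers up to `X` is
`X * G + o(N * G)` uniformly in `X ≤ N`. Hence `c_i ≈ (i / n) * c_n` uniformly in `i ≤ n`, and
`∑ c_i ^ k` behaves like `c_n ^ k * ∑ (i / n) ^ k`.
-/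

section AbelSummation

open Finset

lemma norm_sum_range_smul_le_of_antitone {E : Type*} [SeminormedAddCommGroup E] [NormedSpace ℝ E]
    {f : ℕ → E} {b : ℕ → ℝ} {B : ℝ} (hf : ∀ n, ‖∑ i ∈ range n, f i‖ ≤ B) (hb : Antitone b)
    (hb0 : ∀ n, 0 ≤ b n) (n : ℕ) : ‖∑ i ∈ range n, b i • f i‖ ≤ B * b 0 := by
  rw [sum_range_by_parts]
  calc
    _ ≤ ‖b (n - 1) • ∑ i ∈ range n, f i‖ +
        ∑ i ∈ range (n - 1), ‖(b (i + 1) - b i) • ∑ j ∈ range (i + 1), f j‖ :=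
      (norm_sub_le _ _).trans (by gcongr; exact norm_sum_le _ _)
    _ ≤ b (n - 1) * B + ∑ i ∈ range (n - 1), (b i - b (i + 1)) * B := by
      gcongr with i
      · rw [norm_smul, norm_of_nonneg (hb0 _)]
        exact mul_le_mul_of_nonneg_left (hf n) (hb0 _)
      · have hle := hb i.le_succ
        rw [norm_smul, norm_of_nonpos (sub_nonpos.2 hle), neg_sub]
        exact mul_le_mul_of_nonneg_left (hf _) (sub_nonneg.2 hle)
    _ = B * b 0 := by
      rw [← sum_mul, sum_range_sub']
      ring

end AbelSummation

section LSeriesNearOne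

open Finset
open scoped LSeries.notation

variable {N : ℕ} {χ : DirichletCharacter ℂ N} {s s' : ℝ}

lemma hasSum_rpow_smul_dirichletCharacter (χ : DirichletCharacter ℂ N) (hs : 1 < s) :
    HasSum (fun i : ℕ ↦ ((i + 1 : ℕ) : ℝ) ^ (-s) • χ (i + 1 : ℕ)) (L ↗χ s) := by
  have hL : LSeriesHasSum ↗χ s (L ↗χ s) :=
    (χ.LSeriesSummable_of_one_lt_re (by simpa using hs)).LSeriesHasSum
  rw [LSeriesHasSum, ← hasSum_nat_add_iff' 1] at hL
  simp only [range_one, sum_singleton, LSeries.term_zero, sub_zero] at hL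
  refine hL.congr_fun fun i ↦ ?_
  rw [LSeries.term_of_ne_zero (by lia), Complex.real_smul, Complex.ofReal_cpow (by positivity),
    Complex.ofReal_neg, Complex.cpow_neg, div_eq_inv_mul, Complex.ofReal_natCast]

variable [NeZero N]

lemma sum_range_dirichletCharacter_add_eq_zero (hχ : χ ≠ 1) (c : ℕ) :
    ∑ i ∈ range N, χ (c + i + 1 : ℕ) = 0 := by
  have shifted : ∑ a : ZMod N, χ (a + (c + 1)) = 0 :=
    (Fintype.sum_equiv (Equiv.addRight _) _ _ fun _ ↦ rfl).trans (MulChar.sum_eq_zero_of_ne_one hχ)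
  rw [← shifted]
  refine sum_bij' (fun i _ ↦ (i : ZMod N)) (fun a _ ↦ a.val) (by simp) (fun a _ ↦ ?_)
    (fun i hi ↦ ?_) (fun a _ ↦ ZMod.natCast_zmod_val a) (fun i _ ↦ ?_)
  · simpa using ZMod.val_lt a
  · exact ZMod.val_cast_of_lt (by simpa using hi)
  · push_cast
    ring_nf

lemma norm_sum_range_dirichletCharacter_le (hχ : χ ≠ 1) (n : ℕ) :
    ‖∑ i ∈ range n, χ (i + 1 : ℕ)‖ ≤ N := by
  induction n using Nat.strong_induction_on with
  | _ n ih =>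
    rcases lt_or_ge n N with h | h
    · calc
        _ ≤ ∑ _i ∈ range n, (1 : ℝ) := norm_sum_le_of_le _ fun i _ ↦ χ.norm_le_one _
        _ ≤ N := by simpa using h.le
    · obtain ⟨m, rfl⟩ := Nat.exists_eq_add_of_le' h
      rw [sum_range_add, sum_range_dirichletCharacter_add_eq_zero hχ, add_zero]
      exact ih m (by have := NeZero.pos N; omega)

lemma antitoneOn_rpow_neg_div_sub (hs : 0 < s) (hss' : s ≤ s') :
    AntitoneOn (fun t : ℝ ↦ t ^ (-s) / s - t ^ (-s') / s') (Set.Ici 1) := by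
  have hderiv : ∀ t : ℝ, 0 < t → HasDerivAt (fun t : ℝ ↦ t ^ (-s) / s - t ^ (-s') / s')
      (t ^ (-s' - 1) - t ^ (-s - 1)) t := fun t ht ↦ by
    have hs' : s' ≠ 0 := (hs.trans_le hss').ne'
    refine (((hasDerivAt_rpow_const (p := -s) (Or.inl ht.ne')).div_const s).sub
      ((hasDerivAt_rpow_const (p := -s') (Or.inl ht.ne')).div_const s')).congr_deriv ?_
    rw [mul_div_right_comm, mul_div_right_comm, neg_div_self hs.ne', neg_div_self hs']
    ring
  refine antitoneOn_of_hasDerivWithinAt_nonpos (convex_Ici 1)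
    (fun t ht ↦ (hderiv t (one_pos.trans_le ht)).continuousAt.continuousWithinAt)
    (fun t ht ↦ (hderiv t ?_).hasDerivWithinAt) (fun t ht ↦ sub_nonpos.2 ?_) <;>
  rw [interior_Ici, Set.mem_Ioi] at ht
  · linarith
  · exact rpow_le_rpow_of_exponent_le ht.le (by linarith)

lemma rpow_neg_div_sub_nonneg (hs : 0 < s) (hss' : s ≤ s') {t : ℝ} (ht : 1 ≤ t) :
    0 ≤ t ^ (-s) / s - t ^ (-s') / s' :=
  sub_nonneg.2 (div_le_div₀ (by positivity)
    (rpow_le_rpow_of_exponent_le ht (neg_le_neg hss')) hs hss')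

lemma norm_LSeries_le_of_ne_one (hχ : χ ≠ 1) (hs : 1 < s) : ‖L ↗χ s‖ ≤ N := by
  refine le_of_tendsto (hasSum_rpow_smul_dirichletCharacter χ hs).tendsto_sum_nat.norm
    (.of_forall fun n ↦ (norm_sum_range_smul_le_of_antitone
      (norm_sum_range_dirichletCharacter_le hχ) (fun i j hij ↦ ?_) (fun i ↦ by positivity) n).trans
      (by simp))
  exact rpow_le_rpow_of_nonpos (by positivity) (by gcongr) (by linarith)

lemma norm_LSeries_div_sub_le_of_ne_one (hχ : χ ≠ 1) (hs : 1 < s) (hss' : s ≤ s') :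
    ‖L ↗χ s / s - L ↗χ s' / s'‖ ≤ N * (s' - s) := by
  have hs0 : 0 < s := by linarith
  have hseries : HasSum (fun i : ℕ ↦ (((i + 1 : ℕ) : ℝ) ^ (-s) / s - ((i + 1 : ℕ) : ℝ) ^ (-s') / s')
      • χ (i + 1 : ℕ)) (L ↗χ s / s - L ↗χ s' / s') := by
    refine (((hasSum_rpow_smul_dirichletCharacter χ hs).div_const (s : ℂ)).sub
      ((hasSum_rpow_smul_dirichletCharacter χ (hs.trans_le hss')).div_const (s' : ℂ))).congr_fun
      fun i ↦ ?_
    simp only [Complex.real_smul]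
    push_cast
    ring
  refine le_of_tendsto hseries.tendsto_sum_nat.norm (.of_forall fun n ↦
    (norm_sum_range_smul_le_of_antitone (norm_sum_range_dirichletCharacter_le hχ)
      (fun i j hij ↦ antitoneOn_rpow_neg_div_sub hs0 hss' (by simp) (by simp) (by gcongr))
      (fun i ↦ rpow_neg_div_sub_nonneg hs0 hss' (by simp)) n).trans ?_)
  gcongr
  beta_reduce
  rw [zero_add, Nat.cast_one, one_rpow, one_rpow, div_sub_div _ _ hs0.ne' (by linarith),
    div_le_iff₀ (by nlinarith)]
  nlinarith [mul_nonneg (sub_nonneg.2 hss') (sub_nonneg.2 (by nlinarith : 1 ≤ s * s'))]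

end LSeriesNearOne

section LambertSeries

open Finset

/-- The Lambert series `∑ aₙ xⁿ / (1 - xⁿ)` over `n ≥ 1`, whose power series has the divisor sums
of `a` as coefficients. -/
noncomputable def lambertSeries (a : ℕ → ℂ) (x : ℂ) : ℂ :=
  ∑' i : ℕ, a (i + 1) * (x ^ (i + 1) / (1 - x ^ (i + 1)))

variable {a : ℕ → ℂ} {x : ℂ}

lemma summable_prod_mul_pow_of_norm_le_one (ha : ∀ n, ‖a n‖ ≤ 1) (hx : ‖x‖ < 1) :
    Summable fun c : ℕ+ × ℕ+ ↦ a c.1 * x ^ (c.1 * c.2 : ℕ) := by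
  refine .of_norm_bounded (summable_prod_mul_pow 0 hx).norm fun c ↦ ?_
  rw [norm_mul, pow_zero, one_mul]
  exact mul_le_of_le_one_left (norm_nonneg _) (ha _)

lemma hasSum_pow_pnat_mul (hx : ‖x‖ < 1) (d : ℕ+) :
    HasSum (fun c : ℕ+ ↦ x ^ (d * c : ℕ)) (x ^ (d : ℕ) / (1 - x ^ (d : ℕ))) := by
  have hxd : ‖x ^ (d : ℕ)‖ < 1 := by
    rw [norm_pow]
    exact pow_lt_one₀ (norm_nonneg x) hx d.ne_zero
  rw [← Equiv.pnatEquivNat.symm.hasSum_iff, div_eq_mul_inv]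
  refine ((hasSum_geometric_of_norm_lt_one hxd).mul_left (x ^ (d : ℕ))).congr_fun fun c ↦ ?_
  rw [← pow_succ', ← pow_mul]
  rfl

lemma hasSum_lambertSeries_prod (ha : ∀ n, ‖a n‖ ≤ 1) (hx : ‖x‖ < 1) :
    HasSum (fun i : ℕ ↦ a (i + 1) * (x ^ (i + 1) / (1 - x ^ (i + 1))))
      (∑' c : ℕ+ × ℕ+, a c.1 * x ^ (c.1 * c.2 : ℕ)) := by
  have hrows := (summable_prod_mul_pow_of_norm_le_one ha hx).hasSum.prod_fiberwise
    fun d ↦ (hasSum_pow_pnat_mul hx d).mul_left (a d)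
  rwa [← Equiv.pnatEquivNat.symm.hasSum_iff] at hrows

lemma hasSum_lambertSeries (ha : ∀ n, ‖a n‖ ≤ 1) (hx : ‖x‖ < 1) :
    HasSum (fun i : ℕ ↦ a (i + 1) * (x ^ (i + 1) / (1 - x ^ (i + 1)))) (lambertSeries a x) :=
  (hasSum_lambertSeries_prod ha hx).summable.hasSum

lemma hasSum_sum_divisors_mul_pow_lambertSeries (ha : ∀ n, ‖a n‖ ≤ 1) (hx : ‖x‖ < 1) :
    HasSum (fun n : ℕ+ ↦ (∑ d ∈ (n : ℕ).divisors, a d) * x ^ (n : ℕ)) (lambertSeries a x) := by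
  rw [lambertSeries, (hasSum_lambertSeries_prod ha hx).tsum_eq]
  refine (sigmaAntidiagonalEquivProd.hasSum_iff.mpr
    (summable_prod_mul_pow_of_norm_le_one ha hx).hasSum).sigma fun n ↦ ?_
  have hdiag : (∑ d ∈ (n : ℕ).divisors, a d) * x ^ (n : ℕ) =
      ∑ c : (n : ℕ).divisorsAntidiagonal, a c.1.1 * x ^ (c.1.1 * c.1.2) := by
    rw [sum_coe_sort _ fun c : ℕ × ℕ ↦ a c.1 * x ^ (c.1 * c.2), sum_mul,
      ← Nat.sum_divisorsAntidiagonal fun d _ ↦ a d * x ^ (n : ℕ)]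
    exact sum_congr rfl fun c hc ↦ by rw [(Nat.mem_divisorsAntidiagonal.mp hc).1]
  rw [hdiag]
  exact hasSum_fintype _

end LambertSeries

section LambertWeights

open Finset

variable {x : ℝ}

lemma add_one_mul_sqrt_pow_le_geom_sum (hx : 0 ≤ x) (d : ℕ) :
    (d + 1) * √x ^ d ≤ ∑ i ∈ range (d + 1), x ^ i := by
  have amgm : ∀ i ∈ range (d + 1), 2 * √x ^ d ≤ x ^ i + x ^ (d + 1 - 1 - i) := fun i hi ↦ by
    have hsq : ∀ k : ℕ, x ^ k = (√x ^ k) ^ 2 := fun k ↦ by rw [pow_right_comm, sq_sqrt hx]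
    obtain ⟨j, rfl⟩ := Nat.exists_eq_add_of_le (mem_range_succ_iff.1 hi)
    rw [Nat.add_sub_cancel, Nat.add_sub_cancel_left, hsq, hsq, pow_add]
    nlinarith [sq_nonneg (√x ^ i - √x ^ j)]
  have hsum := sum_le_sum amgm
  rw [sum_add_distrib, sum_range_reflect (fun i ↦ x ^ i), sum_const, card_range, nsmul_eq_mul]
    at hsum
  push_cast at hsum
  linarith

lemma mul_pow_le_geom_sum_mul_geom_sum (hx0 : 0 ≤ x) (hx1 : x ≤ 1) (d : ℕ) :
    (d + 1) * (d + 2) * x ^ (d + 1) ≤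
      (∑ i ∈ range (d + 1), x ^ i) * ∑ i ∈ range (d + 2), x ^ i := by
  have hw1 : √x ≤ 1 := sqrt_le_one.mpr hx1
  calc
    (d + 1) * (d + 2) * x ^ (d + 1) = (d + 1) * (d + 2) * (√x ^ (d + 1) * √x ^ (d + 1)) := by
      rw [← mul_pow, mul_self_sqrt hx0]
    _ ≤ (d + 1) * (d + 2) * (√x ^ d * √x ^ (d + 1)) := by
      gcongr ?_ * (?_ * _)
      exact pow_le_pow_of_le_one (sqrt_nonneg x) hw1 d.le_succ
    _ = ((d + 1) * √x ^ d) * (((d + 1 : ℕ) + 1) * √x ^ (d + 1)) := by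
      push_cast
      ring
    _ ≤ _ := by
      gcongr <;> exact add_one_mul_sqrt_pow_le_geom_sum hx0 _

lemma antitone_inv_sub_pow_div_geom_sum (hx0 : 0 ≤ x) (hx1 : x ≤ 1) :
    Antitone fun i : ℕ ↦ ((i + 1 : ℕ) : ℝ)⁻¹ - x ^ (i + 1) / ∑ j ∈ range (i + 1), x ^ j := by
  refine antitone_nat_of_succ_le fun d ↦ ?_
  have hrec : ∑ j ∈ range (d + 1 + 1), x ^ j = 1 + x * ∑ j ∈ range (d + 1), x ^ j := by
    rw [sum_range_succ', mul_sum, add_comm, pow_zero]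
    simp only [pow_succ']
  have hprod := mul_pow_le_geom_sum_mul_geom_sum hx0 hx1 d
  have hS : 0 < ∑ j ∈ range (d + 1), x ^ j := geom_sum_pos hx0 d.succ_ne_zero
  have hT : 0 < ∑ j ∈ range (d + 1 + 1), x ^ j := geom_sum_pos hx0 (d + 1).succ_ne_zero
  set S := ∑ j ∈ range (d + 1), x ^ j
  set T := ∑ j ∈ range (d + 1 + 1), x ^ j
  have hinv : ((d + 1 : ℕ) : ℝ)⁻¹ - ((d + 1 + 1 : ℕ) : ℝ)⁻¹ = 1 / ((d + 1) * (d + 2)) := by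
    push_cast
    field_simp
    ring
  have hpow : x ^ (d + 1) / S - x ^ (d + 1 + 1) / T = x ^ (d + 1) / (S * T) := by
    field_simp
    rw [hrec]
    ring
  have hle : x ^ (d + 1) / (S * T) ≤ 1 / ((d + 1) * (d + 2)) := by
    rw [div_le_div_iff₀ (by positivity) (by positivity)]
    linarith
  linarith

lemma inv_sub_pow_div_geom_sum_nonneg (hx0 : 0 ≤ x) (hx1 : x ≤ 1) (i : ℕ) :
    0 ≤ ((i + 1 : ℕ) : ℝ)⁻¹ - x ^ (i + 1) / ∑ j ∈ range (i + 1), x ^ j := by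
  have hsum : ((i + 1 : ℕ) : ℝ) * x ^ (i + 1) ≤ ∑ j ∈ range (i + 1), x ^ j := by
    rw [← nsmul_eq_mul]
    simpa using card_nsmul_le_sum (range (i + 1)) (fun j ↦ x ^ j) (x ^ (i + 1)) fun j hj ↦
      pow_le_pow_of_le_one hx0 hx1 (mem_range.1 hj).le
  rw [sub_nonneg, div_le_iff₀ (geom_sum_pos hx0 i.succ_ne_zero), ← div_eq_inv_mul,
    le_div_iff₀' (by positivity)]
  exact hsum

end LambertWeights

section RealCharacters

open Finset
open scoped LSeries.notation

variable {N p : ℕ} {χ : DirichletCharacter ℂ N} {s x : ℝ}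

lemma zetaMul_eq_sum_divisors (χ : DirichletCharacter ℂ N) (n : ℕ) :
    χ.zetaMul n = ∑ d ∈ n.divisors, χ d := by
  rw [DirichletCharacter.zetaMul, ArithmeticFunction.coe_zeta_mul_apply]
  exact sum_congr rfl fun d hd ↦ if_neg (Nat.pos_of_mem_divisors hd).ne'

lemma zetaMul_prime_pow_of_dvd (χ : DirichletCharacter ℂ N) (hp : p.Prime) (hpN : p ∣ N) (j : ℕ) :
    χ.zetaMul (p ^ j) = 1 := by
  rw [zetaMul_eq_sum_divisors, Nat.sum_divisors_prime_pow hp, sum_range_succ', sum_eq_zero,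
    zero_add, pow_zero, Nat.cast_one, map_one]
  refine fun i _ ↦ MulChar.map_nonunit _ fun hunit ↦ hp.one_lt.ne' ?_
  rw [ZMod.isUnit_iff_coprime] at hunit
  exact Nat.eq_one_of_dvd_coprimes hunit (dvd_pow_self p i.succ_ne_zero) hpN

lemma sum_pow_prime_pow_le_re_lambertSeries (hχ : χ ^ 2 = 1) (hp : p.Prime) (hpN : p ∣ N)
    (hx0 : 0 ≤ x) (hx1 : x < 1) (J : ℕ) :
    ∑ j ∈ range J, x ^ p ^ j ≤ (lambertSeries ↗χ x).re := by
  have hre : ∀ n : ℕ, ((∑ d ∈ n.divisors, χ d) * (x : ℂ) ^ n).re = (χ.zetaMul n).re * x ^ n :=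
    fun n ↦ by rw [zetaMul_eq_sum_divisors, ← Complex.ofReal_pow, Complex.re_mul_ofReal]
  have hnonneg : ∀ n : ℕ, 0 ≤ (χ.zetaMul n).re * x ^ n := fun n ↦
    mul_nonneg (Complex.le_def.1 (χ.zetaMul_nonneg hχ n)).1 (pow_nonneg hx0 n)
  have hseries := Complex.hasSum_re (hasSum_sum_divisors_mul_pow_lambertSeries (a := ↗χ) (x := x)
    (fun n ↦ χ.norm_le_one _) (by rwa [Complex.norm_real, norm_of_nonneg hx0]))
  simp only [hre] at hseries
  let P : ℕ+ := ⟨p, hp.pos⟩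
  have hinj : Set.InjOn (fun j ↦ P ^ j) (range J) := fun i _ j _ hij ↦
    Nat.pow_right_injective hp.two_le (by simpa only [PNat.pow_coe] using! congrArg PNat.val hij)
  have hpartial := sum_le_hasSum ((range J).image fun j ↦ P ^ j) (fun n _ ↦ hnonneg n) hseries
  rw [sum_image hinj] at hpartial
  refine (sum_congr rfl fun j _ ↦ ?_).trans_le hpartial
  rw [PNat.pow_coe, PNat.mk_coe, zetaMul_prime_pow_of_dvd χ hp hpN, Complex.one_re, one_mul]

lemma half_le_one_sub_inv_pow (hp : 2 ≤ p) {j J : ℕ} (hj : j < J) :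
    1 / 2 ≤ (1 - ((p : ℝ) ^ J)⁻¹) ^ p ^ j := by
  have hp2 : (2 : ℝ) ≤ p := by exact_mod_cast hp
  have hpow : (p : ℝ) ^ j * 2 ≤ (p : ℝ) ^ J := calc
    (p : ℝ) ^ j * 2 ≤ (p : ℝ) ^ j * p := by gcongr
    _ = (p : ℝ) ^ (j + 1) := (pow_succ _ _).symm
    _ ≤ (p : ℝ) ^ J := pow_le_pow_right₀ (by linarith) hj
  have hJ1 : ((p : ℝ) ^ J)⁻¹ ≤ 1 := inv_le_one_of_one_le₀ (one_le_pow₀ (by linarith))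
  have hbernoulli := one_add_mul_le_pow (a := -((p : ℝ) ^ J)⁻¹) (by linarith) (p ^ j)
  have hsmall : ((p ^ j : ℕ) : ℝ) * ((p : ℝ) ^ J)⁻¹ ≤ 1 / 2 := by
    rw [← div_eq_mul_inv, div_le_div_iff₀ (by positivity) (by norm_num), Nat.cast_pow, one_mul]
    exact hpow
  rw [← sub_eq_add_neg] at hbernoulli
  linarith

-- Both sides are compared with `∑ χ(n) / n` by partial summation.
lemma norm_LSeries_div_sub_lambertSeries_le [NeZero N] (hχ : χ ≠ 1) (hs : 1 < s) (hx0 : 0 ≤ x)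
    (hx1 : x < 1) :
    ‖L ↗χ s / s - (1 - x) * lambertSeries ↗χ x‖ ≤ N * (1 - x) + N * (s - 1) := by
  have hterm : ∀ i : ℕ, x ^ (i + 1) / ∑ j ∈ range (i + 1), x ^ j =
      (1 - x) * (x ^ (i + 1) / (1 - x ^ (i + 1))) := fun i ↦ by
    rw [← geom_sum_mul_neg x (i + 1)]
    field_simp [(sub_pos.2 hx1).ne']
  have hseries := ((hasSum_rpow_smul_dirichletCharacter χ hs).div_const (s : ℂ)).sub
    ((hasSum_lambertSeries (a := ↗χ) (x := x) (fun n ↦ χ.norm_le_one _)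
      (by rwa [Complex.norm_real, norm_of_nonneg hx0])).mul_left (1 - x : ℂ))
  refine le_of_tendsto hseries.tendsto_sum_nat.norm (.of_forall fun n ↦ ?_)
  have hlambert := norm_sum_range_smul_le_of_antitone (norm_sum_range_dirichletCharacter_le hχ)
    (antitone_inv_sub_pow_div_geom_sum hx0 hx1.le)
    (inv_sub_pow_div_geom_sum_nonneg hx0 hx1.le) n
  have hrpow := norm_sum_range_smul_le_of_antitone (norm_sum_range_dirichletCharacter_le hχ)
    (b := fun i : ℕ ↦ ((i + 1 : ℕ) : ℝ) ^ (-1 : ℝ) / 1 - ((i + 1 : ℕ) : ℝ) ^ (-s) / s)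
    (fun i j hij ↦ antitoneOn_rpow_neg_div_sub one_pos hs.le (by simp) (by simp) (by gcongr))
    (fun i ↦ rpow_neg_div_sub_nonneg one_pos hs.le (by simp)) n
  refine le_trans (le_of_eq ?_) ((norm_sub_le _ _).trans (add_le_add
    (hlambert.trans_eq (by simp)) (hrpow.trans ?_)))
  · rw [← sum_sub_distrib]
    refine congrArg _ (sum_congr rfl fun i _ ↦ ?_)
    simp only [hterm, Complex.real_smul, rpow_neg_one]
    push_cast
    ring
  · simp only [zero_add, Nat.cast_one, one_rpow, div_one]
    gcongr ?_ * ?_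
    rw [sub_le_comm, le_div_iff₀ (by linarith)]
    nlinarith [sq_nonneg (s - 1)]

lemma le_norm_LSeries_div_of_sq_eq_one [NeZero N] (hχ : χ ≠ 1) (hχ2 : χ ^ 2 = 1) (hp : p.Prime)
    (hpN : p ∣ N) (hs : 1 < s) {J : ℕ} (hJ : 0 < J) :
    ((p : ℝ) ^ J)⁻¹ * (J / 2 - N) ≤ ‖L ↗χ s / s‖ + N * (s - 1) := by
  have hpJ : 1 < (p : ℝ) ^ J := one_lt_pow₀ (by exact_mod_cast hp.one_lt) hJ.ne'
  set e := ((p : ℝ) ^ J)⁻¹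
  have he0 : 0 < e := by positivity
  have he1 : e < 1 := inv_lt_one_of_one_lt₀ hpJ
  have hre : (J : ℝ) / 2 ≤ (lambertSeries ↗χ (1 - e : ℝ)).re := calc
    (J : ℝ) / 2 = ∑ _j ∈ range J, (1 / 2 : ℝ) := by simp [div_eq_mul_inv]
    _ ≤ ∑ j ∈ range J, (1 - e) ^ p ^ j :=
      sum_le_sum fun j hj ↦ half_le_one_sub_inv_pow hp.two_le (mem_range.1 hj)
    _ ≤ _ := sum_pow_prime_pow_le_re_lambertSeries hχ2 hp hpN (by linarith) (by linarith) J
  have hclose := norm_LSeries_div_sub_lambertSeries_le hχ hs (x := 1 - e) (by linarith)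
    (by linarith)
  rw [← Complex.ofReal_one, ← Complex.ofReal_sub, sub_sub_cancel] at hclose
  set F := lambertSeries ↗χ (1 - e : ℝ)
  have hFnorm : e * F.re ≤ ‖(e : ℂ) * F‖ := by
    rw [norm_mul, Complex.norm_real, norm_of_nonneg he0.le]
    gcongr
    exact Complex.re_le_norm F
  have htri := norm_sub_norm_le ((e : ℂ) * F) (L ↗χ s / s)
  rw [norm_sub_rev] at htri
  nlinarith

end RealCharacters

section ZetaTails

open Finset

variable {σ : ℝ}

lemma exists_rpow_neg_sub_div_eq {t : ℝ} (ht : 0 < t) (hσ : σ ≠ 0) :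
    ∃ c ∈ Set.Ioo t (t + 1), (t ^ (-σ) - (t + 1) ^ (-σ)) / σ = c ^ (-(1 + σ)) := by
  have hderiv : ∀ u : ℝ, 0 < u → HasDerivAt (fun u ↦ -(u ^ (-σ) / σ)) (u ^ (-(1 + σ))) u :=
    fun u hu ↦ by
      refine ((hasDerivAt_rpow_const (p := -σ) (Or.inl hu.ne')).div_const σ).neg.congr_deriv ?_
      rw [neg_mul, neg_div, neg_neg, mul_div_cancel_left₀ _ hσ, neg_add']
      ring_nf
  obtain ⟨c, hc, hslope⟩ := exists_hasDerivAt_eq_slope (fun u ↦ -(u ^ (-σ) / σ))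
    (fun u ↦ u ^ (-(1 + σ))) (lt_add_one t)
    (fun u hu ↦ (hderiv u (ht.trans_le hu.1)).continuousAt.continuousWithinAt)
    (fun u hu ↦ hderiv u (ht.trans hu.1))
  exact ⟨c, hc, by rw [hslope]; ring⟩

lemma add_one_rpow_neg_le_sub_div (hσ : 0 < σ) {t : ℝ} (ht : 0 < t) :
    (t + 1) ^ (-(1 + σ)) ≤ (t ^ (-σ) - (t + 1) ^ (-σ)) / σ := by
  obtain ⟨c, hc, h⟩ := exists_rpow_neg_sub_div_eq ht hσ.ne'
  exact h ▸ rpow_le_rpow_of_nonpos (ht.trans hc.1) hc.2.le (by linarith)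

lemma sub_div_le_rpow_neg (hσ : 0 < σ) {t : ℝ} (ht : 0 < t) :
    (t ^ (-σ) - (t + 1) ^ (-σ)) / σ ≤ t ^ (-(1 + σ)) := by
  obtain ⟨c, hc, h⟩ := exists_rpow_neg_sub_div_eq ht hσ.ne'
  exact h ▸ rpow_le_rpow_of_nonpos ht hc.1.le (by linarith)

lemma hasSum_rpow_neg_sub_div (hσ : 0 < σ) {a : ℕ} (ha : 0 < a) :
    HasSum (fun i : ℕ ↦ (((i + a : ℕ) : ℝ) ^ (-σ) - (((i + a : ℕ) : ℝ) + 1) ^ (-σ)) / σ)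
      ((a : ℝ) ^ (-σ) / σ) := by
  rw [hasSum_iff_tendsto_nat_of_nonneg fun i ↦
    (rpow_nonneg (by positivity) _).trans (add_one_rpow_neg_le_sub_div hσ (by positivity))]
  have htele : ∀ n : ℕ,
      ∑ i ∈ range n, (((i + a : ℕ) : ℝ) ^ (-σ) - (((i + a : ℕ) : ℝ) + 1) ^ (-σ)) / σ =
        ((a : ℝ) ^ (-σ) - ((n + a : ℕ) : ℝ) ^ (-σ)) / σ := fun n ↦ by
    have h := sum_range_sub' (fun i ↦ ((i + a : ℕ) : ℝ) ^ (-σ)) n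
    rw [zero_add] at h
    rw [← sum_div, ← h]
    simp only [Nat.cast_add, Nat.cast_one, add_right_comm]
  have hlim : Tendsto (fun n : ℕ ↦ ((n + a : ℕ) : ℝ) ^ (-σ)) atTop (nhds 0) :=
    ((tendsto_rpow_neg_atTop hσ).comp tendsto_natCast_atTop_atTop).comp (tendsto_add_atTop_nat a)
  simpa only [htele, sub_zero] using (hlim.const_sub ((a : ℝ) ^ (-σ))).div_const σ

lemma summable_natCast_add_rpow_neg (hσ : 0 < σ) (a : ℕ) :
    Summable fun i : ℕ ↦ ((i + a : ℕ) : ℝ) ^ (-(1 + σ)) :=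
  (summable_nat_add_iff a).mpr (summable_nat_rpow.mpr (by linarith))

lemma tsum_natCast_add_rpow_neg_le (hσ : 0 < σ) {a : ℕ} (ha : 0 < a) :
    ∑' i : ℕ, ((i + (a + 1) : ℕ) : ℝ) ^ (-(1 + σ)) ≤ (a : ℝ) ^ (-σ) / σ := by
  rw [← (hasSum_rpow_neg_sub_div hσ ha).tsum_eq]
  refine (summable_natCast_add_rpow_neg hσ (a + 1)).tsum_le_tsum (fun i ↦ ?_)
    (hasSum_rpow_neg_sub_div hσ ha).summable
  rw [← add_assoc, Nat.cast_add_one]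
  exact add_one_rpow_neg_le_sub_div hσ (by positivity)

lemma inv_le_tsum_natCast_add_one_rpow_neg (hσ : 0 < σ) :
    σ⁻¹ ≤ ∑' i : ℕ, ((i + 1 : ℕ) : ℝ) ^ (-(1 + σ)) := by
  have h := hasSum_rpow_neg_sub_div hσ one_pos
  calc
    σ⁻¹ = ((1 : ℕ) : ℝ) ^ (-σ) / σ := by rw [Nat.cast_one, one_rpow, one_div]
    _ = _ := h.tsum_eq.symm
    _ ≤ _ := h.summable.tsum_le_tsum (fun i ↦ sub_div_le_rpow_neg hσ (by positivity))
      (summable_natCast_add_rpow_neg hσ 1)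

lemma tsum_natCast_add_one_rpow_neg_le (hσ : 0 < σ) :
    ∑' i : ℕ, ((i + 1 : ℕ) : ℝ) ^ (-(1 + σ)) ≤ 1 + σ⁻¹ := by
  rw [(summable_natCast_add_rpow_neg hσ 1).tsum_eq_zero_add]
  have htail := tsum_natCast_add_rpow_neg_le hσ one_pos
  simp only [Nat.cast_one, one_rpow, zero_add, one_div] at htail ⊢
  exact add_le_add_right htail 1

end ZetaTails

section LSeriesBounds

open scoped LSeries.notation

variable {N : ℕ} {σ : ℝ}

lemma norm_LSeries_le_two_div (χ : DirichletCharacter ℂ N) (hσ : 0 < σ) (hσ1 : σ ≤ 1) :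
    ‖L ↗χ (1 + σ : ℝ)‖ ≤ 2 / σ := by
  have hzeta : ‖L ↗χ (1 + σ : ℝ)‖ ≤ ∑' i : ℕ, ((i + 1 : ℕ) : ℝ) ^ (-(1 + σ)) := by
    refine (hasSum_rpow_smul_dirichletCharacter χ (by linarith)).norm_le_of_bounded
      (summable_natCast_add_rpow_neg hσ 1).hasSum fun i ↦ ?_
    rw [norm_smul, norm_of_nonneg (by positivity)]
    exact mul_le_of_le_one_right (by positivity) (χ.norm_le_one _)
  have hinv : 1 ≤ σ⁻¹ := (one_le_inv₀ hσ).2 hσ1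
  rw [div_eq_mul_inv]
  linarith [tsum_natCast_add_one_rpow_neg_le hσ]

lemma re_dirichletCharacter_one_nonneg (a : ZMod N) : 0 ≤ ((1 : DirichletCharacter ℂ N) a).re := by
  by_cases ha : IsUnit a
  · rw [MulChar.one_apply ha, Complex.one_re]
    exact zero_le_one
  · rw [MulChar.map_nonunit _ ha, Complex.zero_re]

-- Only the terms with `n ≡ 1 (mod N)` are kept.
lemma inv_le_norm_LSeries_one [NeZero N] (hσ : 0 < σ) (hσ1 : σ ≤ 1) :
    (N ^ 2 * σ)⁻¹ ≤ ‖L ↗(1 : DirichletCharacter ℂ N) (1 + σ : ℝ)‖ := by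
  have hN : 0 < N := NeZero.pos N
  have hN1 : (1 : ℝ) ≤ N := by exact_mod_cast hN
  have hre := Complex.hasSum_re
    (hasSum_rpow_smul_dirichletCharacter (1 : DirichletCharacter ℂ N) (by linarith : 1 < 1 + σ))
  have hnonneg : ∀ i : ℕ, 0 ≤ (((i + 1 : ℕ) : ℝ) ^ (-(1 + σ)) •
      (1 : DirichletCharacter ℂ N) (i + 1 : ℕ)).re := fun i ↦ by
    rw [Complex.smul_re]
    exact smul_nonneg (by positivity) (re_dirichletCharacter_one_nonneg _)
  have hterm : ∀ k : ℕ, (N : ℝ) ^ (-(1 + σ)) * ((k + 1 : ℕ) : ℝ) ^ (-(1 + σ)) ≤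
      (((N * k + 1 : ℕ) : ℝ) ^ (-(1 + σ)) •
        (1 : DirichletCharacter ℂ N) (N * k + 1 : ℕ)).re := fun k ↦ by
    rw [Nat.cast_add_one (R := ZMod N), Nat.cast_mul, ZMod.natCast_self, zero_mul, zero_add,
      map_one, Complex.smul_re, Complex.one_re, smul_eq_mul, mul_one,
      ← mul_rpow (by positivity) (by positivity)]
    refine rpow_le_rpow_of_nonpos (by positivity) ?_ (by linarith)
    push_cast
    nlinarith
  calc
    (N ^ 2 * σ)⁻¹ = (N : ℝ) ^ (-2 : ℝ) * σ⁻¹ := by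
      rw [rpow_neg (by positivity), rpow_two, mul_inv]
    _ ≤ (N : ℝ) ^ (-(1 + σ)) * ∑' i : ℕ, ((i + 1 : ℕ) : ℝ) ^ (-(1 + σ)) := by
      gcongr
      · linarith
      · exact inv_le_tsum_natCast_add_one_rpow_neg hσ
    _ = ∑' k : ℕ, (N : ℝ) ^ (-(1 + σ)) * ((k + 1 : ℕ) : ℝ) ^ (-(1 + σ)) := tsum_mul_left.symm
    _ ≤ (L ↗(1 : DirichletCharacter ℂ N) (1 + σ : ℝ)).re := by
      rw [← hre.tsum_eq]
      exact Summable.tsum_le_tsum_of_inj (N * ·) (mul_right_injective₀ hN.ne')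
        (fun c _ ↦ hnonneg c) hterm ((summable_natCast_add_rpow_neg hσ 1).mul_left _) hre.summable
    _ ≤ _ := Complex.re_le_norm _

lemma norm_LSeries_inv (χ : DirichletCharacter ℂ N) {s : ℝ} (hs : 1 < s) :
    ‖L ↗(χ⁻¹) s‖ = ‖L ↗χ s‖ := by
  have hstar : HasSum (fun i : ℕ ↦ ((i + 1 : ℕ) : ℝ) ^ (-s) • χ⁻¹ (i + 1 : ℕ)) (star (L ↗χ s)) :=
    (hasSum_rpow_smul_dirichletCharacter χ hs).star.congr_fun fun i ↦ by
      rw [star_smul, star_trivial, ← MulChar.star_apply, MulChar.star_eq_inv]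
  rw [(hasSum_rpow_smul_dirichletCharacter χ⁻¹ hs).unique hstar, norm_star]

end LSeriesBounds

section EulerProduct

open Finset
open scoped LSeries.notation

/-- The sum of `q ^ (-s)` over the primes `q ≡ 1 (mod N)`. -/
noncomputable def primeZetaOneMod (N : ℕ) (s : ℝ) : ℝ :=
  ∑' q : Nat.Primes, if (q : ℕ) ≡ 1 [MOD N] then (q : ℝ) ^ (-s) else 0

variable {N : ℕ} {s : ℝ}

lemma primeZetaOneMod_nonneg (N : ℕ) (s : ℝ) : 0 ≤ primeZetaOneMod N s :=
  tsum_nonneg fun q ↦ by split_ifs <;> positivity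

lemma summable_primeZetaOneMod (N : ℕ) (hs : 1 < s) :
    Summable fun q : Nat.Primes ↦ if (q : ℕ) ≡ 1 [MOD N] then (q : ℝ) ^ (-s) else 0 :=
  .of_nonneg_of_le (fun q ↦ by split_ifs <;> positivity)
    (fun q ↦ by split_ifs; exacts [le_rfl, by positivity])
    (Nat.Primes.summable_rpow.mpr (neg_lt_neg hs))

lemma natCast_zmod_eq_one_iff {q : ℕ} : (q : ZMod N) = 1 ↔ q ≡ 1 [MOD N] := by
  rw [← ZMod.natCast_eq_natCast_iff, Nat.cast_one]

lemma summable_one_div_primes_sq : Summable fun q : Nat.Primes ↦ 1 / (q : ℝ) ^ 2 :=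
  hasSum_zeta_two.summable.comp_injective Nat.Primes.coe_nat_injective

lemma tsum_one_div_primes_sq_le_two : ∑' q : Nat.Primes, 1 / (q : ℝ) ^ 2 ≤ 2 := calc
  _ ≤ ∑' n : ℕ, 1 / (n : ℝ) ^ 2 :=
    summable_one_div_primes_sq.tsum_le_tsum_of_inj _ Nat.Primes.coe_nat_injective
      (fun _ _ ↦ by positivity) (fun _ ↦ le_rfl) hasSum_zeta_two.summable
  _ = π ^ 2 / 6 := hasSum_zeta_two.tsum_eq
  _ ≤ 2 := by nlinarith [pi_lt_d2, pi_pos]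

lemma norm_neg_log_one_sub_sub_self_le_sq {z : ℂ} (hz : ‖z‖ ≤ 1 / 2) :
    ‖-Complex.log (1 - z) - z‖ ≤ ‖z‖ ^ 2 := by
  have hlog := Complex.norm_log_one_add_sub_self_le (z := -z) (by rw [norm_neg]; linarith)
  have hinv : (1 - ‖z‖)⁻¹ ≤ 2 := by
    rw [inv_le_comm₀ (by linarith) (by norm_num)]
    linarith
  rw [norm_neg, sub_neg_eq_add, ← sub_eq_add_neg] at hlog
  rw [← neg_add', norm_neg]
  nlinarith [sq_nonneg ‖z‖]

lemma hasSum_log_norm_LSeries (χ : DirichletCharacter ℂ N) (hs : 1 < s) :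
    HasSum (fun q : Nat.Primes ↦ (-Complex.log (1 - χ q * (q : ℂ) ^ (-(s : ℂ)))).re)
      (log ‖L ↗χ s‖) := by
  have hs' : 1 < (s : ℂ).re := by simpa using hs
  rw [← χ.LSeries_eulerProduct_exp_log hs', Complex.norm_exp, log_exp]
  exact Complex.hasSum_re (χ.summable_neg_log_one_sub_mul_prime_cpow hs').hasSum

lemma card_dirichletCharacter [NeZero N] : Fintype.card (DirichletCharacter ℂ N) = N.totient := by
  rw [← Nat.card_eq_fintype_card, DirichletCharacter.card_eq_totient_of_hasEnoughRootsOfUnity]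

lemma abs_re_neg_log_sub_re_le (χ : DirichletCharacter ℂ N) (hs : 1 ≤ s) (q : Nat.Primes) :
    |(-Complex.log (1 - χ q * (q : ℂ) ^ (-(s : ℂ)))).re - (χ q * (q : ℂ) ^ (-(s : ℂ))).re| ≤
      1 / (q : ℝ) ^ 2 := by
  have hq2 : (2 : ℝ) ≤ q := by exact_mod_cast q.2.two_le
  have hnorm : ‖χ q * (q : ℂ) ^ (-(s : ℂ))‖ ≤ 1 / (q : ℝ) := calc
    _ ≤ ‖(q : ℂ) ^ (-(s : ℂ))‖ := by
      rw [norm_mul]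
      exact mul_le_of_le_one_left (norm_nonneg _) (χ.norm_le_one _)
    _ = (q : ℝ) ^ (-s) := by
      rw [Complex.norm_natCast_cpow_of_pos q.2.pos, Complex.neg_re, Complex.ofReal_re]
    _ ≤ (q : ℝ) ^ (-1 : ℝ) := rpow_le_rpow_of_exponent_le (by linarith) (by linarith)
    _ = 1 / (q : ℝ) := by rw [rpow_neg_one, one_div]
  rw [← Complex.sub_re]
  calc
    _ ≤ _ := Complex.abs_re_le_norm _
    _ ≤ _ := norm_neg_log_one_sub_sub_self_le_sq
      (hnorm.trans (one_div_le_one_div_of_le two_pos hq2))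
    _ ≤ (1 / (q : ℝ)) ^ 2 := by gcongr
    _ = 1 / (q : ℝ) ^ 2 := by rw [div_pow, one_pow]

lemma sum_re_dirichletCharacter_mul_cpow [NeZero N] (s : ℝ) (q : Nat.Primes) :
    ∑ χ : DirichletCharacter ℂ N, (χ q * (q : ℂ) ^ (-(s : ℂ))).re =
      N.totient * if (q : ℕ) ≡ 1 [MOD N] then (q : ℝ) ^ (-s) else 0 := by
  have hcpow : (q : ℂ) ^ (-(s : ℂ)) = ((q : ℝ) ^ (-s) : ℝ) := by
    rw [Complex.ofReal_cpow (by positivity), Complex.ofReal_neg, Complex.ofReal_natCast]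
  rw [← Complex.re_sum, ← sum_mul, DirichletCharacter.sum_characters_eq, hcpow,
    Complex.re_mul_ofReal]
  simp only [natCast_zmod_eq_one_iff]
  split_ifs <;> simp

theorem abs_sum_log_norm_LSeries_sub_le [NeZero N] (hs : 1 < s) :
    |∑ χ : DirichletCharacter ℂ N, log ‖L ↗χ s‖ - N.totient * primeZetaOneMod N s| ≤
      2 * N.totient := by
  have hdiff := (hasSum_sum fun (χ : DirichletCharacter ℂ N) (_ : χ ∈ univ) ↦
    hasSum_log_norm_LSeries χ hs).sub
      ((summable_primeZetaOneMod N hs).hasSum.mul_left (N.totient : ℝ))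
  have hterm : ∀ q : Nat.Primes,
      ‖∑ χ : DirichletCharacter ℂ N, (-Complex.log (1 - χ q * (q : ℂ) ^ (-(s : ℂ)))).re -
        N.totient * (if (q : ℕ) ≡ 1 [MOD N] then (q : ℝ) ^ (-s) else 0)‖ ≤
        N.totient * (1 / (q : ℝ) ^ 2) := fun q ↦ by
    rw [← sum_re_dirichletCharacter_mul_cpow, ← sum_sub_distrib, ← card_dirichletCharacter,
      ← nsmul_eq_mul, ← card_univ, ← sum_const]
    exact norm_sum_le_of_le _ fun χ _ ↦ abs_re_neg_log_sub_re_le χ hs.le q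
  have hbound := hdiff.norm_le_of_bounded (summable_one_div_primes_sq.hasSum.mul_left _) hterm
  rw [Real.norm_eq_abs] at hbound
  refine hbound.trans ?_
  rw [mul_comm 2]
  gcongr
  exact tsum_one_div_primes_sq_le_two

end EulerProduct

section LowerBounds

open Finset
open scoped LSeries.notation

/-- A distance to `1` so small that, on the segment between `1` and `1 + nonvanishingOffset N`, the
`L`-series of a nontrivial character modulo `N` varies by less than its lower bound at the end. -/
noncomputable def nonvanishingOffset (N : ℕ) : ℝ := ((N : ℝ) ^ (9 * N))⁻¹

variable {N : ℕ} {χ : DirichletCharacter ℂ N} {σ : ℝ}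

lemma norm_LSeries_pos (χ : DirichletCharacter ℂ N) {s : ℝ} (hs : 1 < s) : 0 < ‖L ↗χ s‖ :=
  norm_pos_iff.2 (χ.LSeries_ne_zero_of_one_lt_re (by simpa using hs))

lemma nonvanishingOffset_pos (hN : 2 ≤ N) : 0 < nonvanishingOffset N := by
  have : 0 < N := by lia
  unfold nonvanishingOffset
  positivity

lemma nonvanishingOffset_le_one (hN : 2 ≤ N) : nonvanishingOffset N ≤ 1 :=
  inv_le_one_of_one_le₀ (one_le_pow₀ (by exact_mod_cast (by lia : 1 ≤ N)))

lemma log_nonvanishingOffset (N : ℕ) : log (nonvanishingOffset N) = -(9 * N * log N) := by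
  rw [nonvanishingOffset, log_inv, log_pow]
  push_cast
  rfl

lemma norm_LSeries_div_ofReal (χ : DirichletCharacter ℂ N) {s : ℝ} (hs : 0 ≤ s) :
    ‖L ↗χ s / s‖ = ‖L ↗χ s‖ / s := by
  rw [norm_div, Complex.norm_real, norm_of_nonneg hs]

lemma neg_two_totient_le_sum_log_norm_LSeries [NeZero N] {s : ℝ} (hs : 1 < s) :
    -(2 * N.totient : ℝ) ≤ ∑ χ : DirichletCharacter ℂ N, log ‖L ↗χ s‖ := by
  have hT : 0 ≤ N.totient * primeZetaOneMod N s :=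
    mul_nonneg (Nat.cast_nonneg _) (primeZetaOneMod_nonneg N s)
  linarith [(abs_le.1 (abs_sum_log_norm_LSeries_sub_le (N := N) hs)).1]

-- A complex character and its conjugate contribute equal factors to the product of all `L`-series.
lemma le_two_mul_log_norm_LSeries_of_sq_ne_one [NeZero N] (hχ : χ ^ 2 ≠ 1) (hσ : 0 < σ)
    (hσ1 : σ ≤ 1) :
    -(2 * N.totient + log (2 / σ) + N.totient * log N) ≤ 2 * log ‖L ↗χ (1 + σ : ℝ)‖ := by
  classical
  have hs : 1 < 1 + σ := by linarith
  let ℓ : DirichletCharacter ℂ N → ℝ := fun ψ ↦ log ‖L ↗ψ (1 + σ : ℝ)‖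
  have hχ1 : χ ≠ 1 := fun h ↦ hχ (by rw [h, one_pow])
  have hinv : χ⁻¹ ≠ χ := fun h ↦ hχ (by rw [sq, ← mul_inv_cancel χ, h])
  have hinv_mem : χ⁻¹ ∈ univ.erase χ := mem_erase.2 ⟨hinv, mem_univ _⟩
  have hone_mem : (1 : DirichletCharacter ℂ N) ∈ (univ.erase χ).erase χ⁻¹ :=
    mem_erase.2 ⟨fun h ↦ hχ1 (inv_eq_one.1 h.symm), mem_erase.2 ⟨hχ1.symm, mem_univ _⟩⟩
  have hinv_eq : ℓ χ⁻¹ = ℓ χ := congrArg log (norm_LSeries_inv χ hs)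
  have hone : ℓ 1 ≤ log (2 / σ) :=
    log_le_log (norm_LSeries_pos 1 hs) (norm_LSeries_le_two_div 1 hσ hσ1)
  have hrest : ∑ ψ ∈ ((univ.erase χ).erase χ⁻¹).erase 1, ℓ ψ ≤ N.totient * log N := calc
    _ ≤ #(((univ.erase χ).erase χ⁻¹).erase 1) • log N := sum_le_card_nsmul _ _ _ fun ψ hψ ↦
      log_le_log (norm_LSeries_pos ψ hs) (norm_LSeries_le_of_ne_one (ne_of_mem_erase hψ) hs)
    _ ≤ N.totient * log N := by
      rw [nsmul_eq_mul, ← card_dirichletCharacter]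
      gcongr
      exact card_le_univ _
  have hall := neg_two_totient_le_sum_log_norm_LSeries (N := N) hs
  change _ ≤ ∑ ψ, ℓ ψ at hall
  rw [← add_sum_erase _ ℓ (mem_univ χ), ← add_sum_erase _ ℓ hinv_mem, ← add_sum_erase _ ℓ hone_mem,
    hinv_eq] at hall
  change _ ≤ 2 * ℓ χ
  linarith

lemma log_bounds_of_two_le (hN : 2 ≤ N) :
    log 2 ≤ N * log N / 2 ∧ log N ≤ N * log N / 2 ∧ (N : ℝ) ≤ 3 / 2 * (N * log N) := by
  have hN2 : (2 : ℝ) ≤ N := by exact_mod_cast hN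
  have hlog : log 2 ≤ log N := log_le_log two_pos hN2
  have hlog2 := log_two_gt_d9
  refine ⟨?_, ?_, ?_⟩ <;> nlinarith

lemma le_norm_LSeries_of_sq_ne_one (hN : 2 ≤ N) (hχ : χ ^ 2 ≠ 1) :
    4 * N * nonvanishingOffset N ≤ ‖L ↗χ (1 + nonvanishingOffset N : ℝ)‖ := by
  have : NeZero N := ⟨by lia⟩
  have hN0 : (0 : ℝ) < N := by exact_mod_cast (by lia : 0 < N)
  have hδ := nonvanishingOffset_pos hN
  have hbound := le_two_mul_log_norm_LSeries_of_sq_ne_one hχ hδ (nonvanishingOffset_le_one hN)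
  have htot : (N.totient : ℝ) ≤ N := by exact_mod_cast N.totient_le
  have htotlog : N.totient * log N ≤ N * log N := by gcongr
  obtain ⟨hlog2, hlogN, hNlog⟩ := log_bounds_of_two_le hN
  have hlog4 : log 4 = 2 * log 2 := by
    rw [show (4 : ℝ) = 2 ^ 2 by norm_num, log_pow, Nat.cast_ofNat]
  rw [log_div two_ne_zero hδ.ne', log_nonvanishingOffset] at hbound
  rw [← log_le_log_iff (by positivity) (norm_LSeries_pos χ (by linarith)),
    log_mul (by positivity) hδ.ne', log_mul (by norm_num) hN0.ne', log_nonvanishingOffset, hlog4]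
  linarith

lemma three_mul_nonvanishingOffset_le {p : ℕ} (hp : 0 < p) (hpN : p ≤ N) (hN : 2 ≤ N) :
    3 * nonvanishingOffset N ≤ ((p : ℝ) ^ (4 * N))⁻¹ := by
  have hN2 : (2 : ℝ) ≤ N := by exact_mod_cast hN
  rw [nonvanishingOffset, ← div_eq_mul_inv, ← one_div,
    div_le_div_iff₀ (by positivity) (by positivity), one_mul]
  calc
    3 * (p : ℝ) ^ (4 * N) ≤ N ^ 2 * (N : ℝ) ^ (4 * N) := by
      gcongr
      nlinarith
    _ = (N : ℝ) ^ (2 + 4 * N) := (pow_add _ _ _).symm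
    _ ≤ (N : ℝ) ^ (9 * N) := pow_le_pow_right₀ (by linarith) (by lia)

lemma le_norm_LSeries_div_of_sq_eq_one_of_two_le (hN : 2 ≤ N) (hχ1 : χ ≠ 1) (hχ : χ ^ 2 = 1) :
    2 * N * nonvanishingOffset N ≤
      ‖L ↗χ (1 + nonvanishingOffset N : ℝ) / (1 + nonvanishingOffset N : ℝ)‖ := by
  have : NeZero N := ⟨by lia⟩
  have hδ := nonvanishingOffset_pos hN
  have hbound := le_norm_LSeries_div_of_sq_eq_one (s := 1 + nonvanishingOffset N) (J := 4 * N) hχ1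
    hχ (N.minFac_prime (by lia)) N.minFac_dvd (by linarith) (by lia)
  have hsmall := three_mul_nonvanishingOffset_le N.minFac_pos (N.minFac_le (by lia)) hN
  have hJ : ((4 * N : ℕ) : ℝ) / 2 - N = N := by
    push_cast
    ring
  rw [hJ, add_sub_cancel_left] at hbound
  nlinarith [Nat.cast_nonneg (α := ℝ) N]

lemma le_norm_LSeries_div_of_ne_one (hN : 2 ≤ N) (hχ : χ ≠ 1) :
    2 * N * nonvanishingOffset N ≤
      ‖L ↗χ (1 + nonvanishingOffset N : ℝ) / (1 + nonvanishingOffset N : ℝ)‖ := by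
  by_cases hχ2 : χ ^ 2 = 1
  · exact le_norm_LSeries_div_of_sq_eq_one_of_two_le hN hχ hχ2
  have hδ := nonvanishingOffset_pos hN
  have hδ1 := nonvanishingOffset_le_one hN
  rw [norm_LSeries_div_ofReal χ (by linarith), le_div_iff₀ (by linarith)]
  calc
    2 * N * nonvanishingOffset N * (1 + nonvanishingOffset N) ≤
        2 * N * nonvanishingOffset N * 2 := by
      gcongr
      linarith
    _ = 4 * N * nonvanishingOffset N := by ring
    _ ≤ _ := le_norm_LSeries_of_sq_ne_one hN hχ2

lemma norm_LSeries_offset_div_four_le (hN : 2 ≤ N) (hχ : χ ≠ 1) (hσ : 0 < σ)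
    (hσδ : σ ≤ nonvanishingOffset N) :
    ‖L ↗χ (1 + nonvanishingOffset N : ℝ)‖ / 4 ≤ ‖L ↗χ (1 + σ : ℝ)‖ := by
  have : NeZero N := ⟨by lia⟩
  have hδ1 := nonvanishingOffset_le_one hN
  have hlow := le_norm_LSeries_div_of_ne_one hN hχ
  have hlip := norm_LSeries_div_sub_le_of_ne_one hχ (s := 1 + σ) (s' := 1 + nonvanishingOffset N)
    (by linarith) (by linarith)
  set η := nonvanishingOffset N
  have htri := norm_sub_norm_le (L ↗χ (1 + η : ℝ) / (1 + η : ℝ)) (L ↗χ (1 + σ : ℝ) / (1 + σ : ℝ))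
  rw [norm_sub_rev] at htri
  have hNδ : (N : ℝ) * (1 + η - (1 + σ)) ≤ N * η := by
    gcongr
    linarith
  rw [norm_LSeries_div_ofReal χ (by linarith)] at hlow
  rw [norm_LSeries_div_ofReal χ (by linarith), norm_LSeries_div_ofReal χ (by linarith)] at htri
  have hhalf : ‖L ↗χ (1 + η : ℝ)‖ / 2 ≤ ‖L ↗χ (1 + η : ℝ)‖ / (1 + η) :=
    div_le_div_of_nonneg_left (norm_nonneg _) (by linarith) (by linarith)
  have hself : ‖L ↗χ (1 + σ : ℝ)‖ / (1 + σ) ≤ ‖L ↗χ (1 + σ : ℝ)‖ :=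
    div_le_self (norm_nonneg _) (by linarith)
  linarith

lemma neg_le_sum_log_norm_LSeries_of_ne_one [DecidableEq (DirichletCharacter ℂ N)]
    (hN : 2 ≤ N) (hσ : 0 < σ) (hσδ : σ ≤ nonvanishingOffset N) :
    -(2 * N.totient + log (2 / nonvanishingOffset N) + N.totient * log 4) ≤
      ∑ χ ∈ univ.erase (1 : DirichletCharacter ℂ N), log ‖L ↗χ (1 + σ : ℝ)‖ := by
  have : NeZero N := ⟨by lia⟩
  have hδ := nonvanishingOffset_pos hN
  set η := nonvanishingOffset N
  have hone : log ‖L ↗(1 : DirichletCharacter ℂ N) (1 + η : ℝ)‖ ≤ log (2 / η) :=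
    log_le_log (norm_LSeries_pos 1 (by linarith))
      (norm_LSeries_le_two_div 1 hδ (nonvanishingOffset_le_one hN))
  have hall := neg_two_totient_le_sum_log_norm_LSeries (N := N) (by linarith : 1 < 1 + η)
  rw [← add_sum_erase _ _ (mem_univ 1)] at hall
  have hcompare : ∑ χ ∈ univ.erase (1 : DirichletCharacter ℂ N),
      (log ‖L ↗χ (1 + η : ℝ)‖ - log 4) ≤
      ∑ χ ∈ univ.erase (1 : DirichletCharacter ℂ N), log ‖L ↗χ (1 + σ : ℝ)‖ :=
    sum_le_sum fun χ hχ ↦ by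
      have hpos := norm_LSeries_pos χ (by linarith : 1 < 1 + η)
      rw [← log_div hpos.ne' four_ne_zero]
      exact log_le_log (by positivity)
        (norm_LSeries_offset_div_four_le hN (ne_of_mem_erase hχ) hσ hσδ)
  have hcard : (#(univ.erase (1 : DirichletCharacter ℂ N)) : ℝ) * log 4 ≤ N.totient * log 4 := by
    rw [← card_dirichletCharacter]
    have : 0 ≤ log 4 := log_nonneg (by norm_num)
    gcongr
    exact card_le_univ _
  rw [sum_sub_distrib, sum_const, nsmul_eq_mul] at hcompare
  linarith

theorem log_inv_sub_le_totient_mul_primeZetaOneMod (hN : 2 ≤ N) (hσ : 0 < σ)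
    (hσδ : σ ≤ nonvanishingOffset N) :
    log σ⁻¹ - 20 * N * log N ≤ N.totient * primeZetaOneMod N (1 + σ) := by
  classical
  have : NeZero N := ⟨by lia⟩
  have hN0 : (N : ℝ) ≠ 0 := NeZero.ne _
  have hδ := nonvanishingOffset_pos hN
  have hone := log_le_log (by positivity)
    (inv_le_norm_LSeries_one (N := N) hσ (hσδ.trans (nonvanishingOffset_le_one hN)))
  have hrest := neg_le_sum_log_norm_LSeries_of_ne_one hN hσ hσδ
  have hall := (abs_le.1 (abs_sum_log_norm_LSeries_sub_le (N := N) (by linarith : 1 < 1 + σ))).2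
  rw [← add_sum_erase _ _ (mem_univ 1)] at hall
  rw [log_inv, log_mul (pow_ne_zero 2 hN0) hσ.ne', log_pow, Nat.cast_ofNat] at hone
  rw [log_div two_ne_zero hδ.ne', log_nonvanishingOffset, show (4 : ℝ) = 2 ^ 2 by norm_num,
    log_pow, Nat.cast_ofNat] at hrest
  rw [log_inv]
  have htot : (N.totient : ℝ) ≤ N := by exact_mod_cast N.totient_le
  have htotlog : N.totient * log 2 ≤ N * log N := by
    have : (2 : ℝ) ≤ N := by exact_mod_cast hN
    gcongr
  obtain ⟨hlog2, hlogN, hNlog⟩ := log_bounds_of_two_le hN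
  linarith

end LowerBounds

section PrimesOneMod

open Finset

/-- The primes `q ≤ z` with `q ≡ 1 (mod N)`. -/
def primesOneMod (N z : ℕ) : Finset ℕ := {q ∈ Nat.primesLE z | q ≡ 1 [MOD N]}

variable {N z : ℕ}

lemma mem_primesOneMod {q : ℕ} : q ∈ primesOneMod N z ↔ q ≤ z ∧ q.Prime ∧ q ≡ 1 [MOD N] := by
  rw [primesOneMod, mem_filter, Nat.mem_primesLE, and_assoc]

lemma primeZetaOneMod_eq_tsum_nat (N : ℕ) (s : ℝ) :
    primeZetaOneMod N s =
      ∑' n : ℕ, if n.Prime ∧ n ≡ 1 [MOD N] then (n : ℝ) ^ (-s) else 0 := by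
  have hsub := tsum_subtype {n : ℕ | n.Prime} fun n ↦ if n ≡ 1 [MOD N] then (n : ℝ) ^ (-s) else 0
  simpa only [Set.indicator_apply, Set.mem_ofPred_eq, ← ite_and] using! hsub

lemma primeZetaOneMod_le_sum_primesOneMod_add {σ : ℝ} (hσ : 0 < σ) (hz : 0 < z) :
    primeZetaOneMod N (1 + σ) ≤ ∑ q ∈ primesOneMod N z, (q : ℝ)⁻¹ + (z : ℝ) ^ (-σ) / σ := by
  let g : ℕ → ℝ := fun n ↦ if n.Prime ∧ n ≡ 1 [MOD N] then (n : ℝ) ^ (-(1 + σ)) else 0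
  have hg_nonneg : ∀ n, 0 ≤ g n := fun n ↦ ite_nonneg (by positivity) le_rfl
  have hg_le : ∀ n, g n ≤ (n : ℝ) ^ (-(1 + σ)) := fun n ↦ by
    unfold g
    split_ifs
    exacts [le_rfl, by positivity]
  have hg_summable : Summable g :=
    .of_nonneg_of_le hg_nonneg hg_le (summable_nat_rpow.mpr (by linarith))
  rw [primeZetaOneMod_eq_tsum_nat, ← hg_summable.sum_add_tsum_nat_add (z + 1)]
  gcongr
  · have hfilter : primesOneMod N z = {n ∈ range (z + 1) | n.Prime ∧ n ≡ 1 [MOD N]} := by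
      ext n
      rw [mem_primesOneMod, mem_filter, mem_range_succ_iff]
    rw [hfilter, ← sum_filter]
    refine sum_le_sum fun q hq ↦ ?_
    rw [← rpow_neg_one]
    exact rpow_le_rpow_of_exponent_le (by exact_mod_cast (mem_filter.1 hq).2.1.one_le)
      (by linarith)
  · exact (((summable_nat_add_iff (z + 1)).2 hg_summable).tsum_le_tsum (fun i ↦ hg_le _)
      (summable_natCast_add_rpow_neg hσ (z + 1))).trans (tsum_natCast_add_rpow_neg_le hσ hz)

theorem log_log_div_two_sub_le_sum_primesOneMod (hN : 2 ≤ N)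
    (hz : (N : ℝ) ^ (9 * N) ≤ √(log z)) :
    log (log z) / 2 - 20 * N * log N ≤ N * (∑ q ∈ primesOneMod N z, (q : ℝ)⁻¹ + 1) := by
  have : 0 < N := by lia
  set w := √(log z)
  have hw : 0 < w := (by positivity : (0 : ℝ) < (N : ℝ) ^ (9 * N)).trans_le hz
  have hlogz : log z = w ^ 2 := (sq_sqrt (sqrt_pos.1 hw).le).symm
  have hz0 : 0 < z := Nat.pos_of_ne_zero fun h ↦ by
    rw [h, Nat.cast_zero, log_zero] at hlogz
    exact (pow_pos hw 2).ne hlogz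
  have hlower := log_inv_sub_le_totient_mul_primeZetaOneMod hN (inv_pos.2 hw)
    (inv_anti₀ (by positivity) hz)
  have hupper := primeZetaOneMod_le_sum_primesOneMod_add (N := N) (inv_pos.2 hw) hz0
  have htail : (z : ℝ) ^ (-w⁻¹) / w⁻¹ ≤ 1 := by
    have hexp : w ^ 2 * -w⁻¹ = -w := by field_simp
    rw [rpow_def_of_pos (by exact_mod_cast hz0), hlogz, hexp, exp_neg, div_inv_eq_mul,
      inv_mul_le_iff₀ (exp_pos _), mul_one]
    linarith [add_one_le_exp w]
  calc
    log (log z) / 2 - 20 * N * log N = log w⁻¹⁻¹ - 20 * N * log N := by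
      rw [hlogz, log_pow, inv_inv, Nat.cast_ofNat, mul_div_cancel_left₀ _ two_ne_zero]
    _ ≤ N.totient * primeZetaOneMod N (1 + w⁻¹) := hlower
    _ ≤ N * primeZetaOneMod N (1 + w⁻¹) := by
      gcongr
      exacts [primeZetaOneMod_nonneg _ _, N.totient_le]
    _ ≤ _ := by
      gcongr
      linarith

end PrimesOneMod

section CyclicNumbers

namespace IsCyclicNum

variable {n p q : ℕ}

lemma not_modEq_one (hn : IsCyclicNum n) (hp : p.Prime) (hq : q.Prime) (hpn : p ∣ n)
    (hqn : q ∣ n) : ¬ q ≡ 1 [MOD p] := fun h ↦ by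
  have hpq : p ∣ q.totient := by
    rw [Nat.totient_prime hq]
    exact (Nat.modEq_iff_dvd' hq.one_le).1 h.symm
  have hgcd : p ∣ n.gcd n.totient := Nat.dvd_gcd hpn (hpq.trans (Nat.totient_dvd_of_dvd hqn))
  rw [hn.2] at hgcd
  exact hp.not_dvd_one hgcd

lemma of_prime (hp : p.Prime) : IsCyclicNum p :=
  ⟨hp.pos, by
    rw [Nat.totient_prime hp]
    exact (Nat.coprime_self_sub_right hp.one_le).2 (Nat.coprime_one_right p)⟩

end IsCyclicNum

lemma exists_prime_mul_dvd_of_not_isCyclicNum {n : ℕ} (hn : 0 < n) (h : ¬ IsCyclicNum n) :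
    ∃ p, p.Prime ∧ (p * p ∣ n ∨ ∃ q, q.Prime ∧ q ≡ 1 [MOD p] ∧ p * q ∣ n) := by
  obtain ⟨p, hp, hpgcd⟩ := Nat.exists_prime_and_dvd fun hgcd ↦ h ⟨hn, hgcd⟩
  refine ⟨p, hp, ?_⟩
  have hpn : p ∣ n := hpgcd.trans (Nat.gcd_dvd_left _ _)
  have hpφ : p ∣ n.totient := hpgcd.trans (Nat.gcd_dvd_right _ _)
  rw [Nat.totient_eq_prod_factorization hn.ne', Finsupp.prod, Nat.support_factorization,
    hp.prime.dvd_finsetProd_iff] at hpφ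
  obtain ⟨q, hq, hpq⟩ := hpφ
  have hq' : q.Prime := Nat.prime_of_mem_primeFactors hq
  rcases hp.dvd_mul.1 hpq with hpow | hsub
  · obtain rfl : p = q := (Nat.prime_dvd_prime_iff_eq hp hq').1 (hp.dvd_of_dvd_pow hpow)
    have hexp : n.factorization p - 1 ≠ 0 := fun h0 ↦ by
      rw [h0, pow_zero] at hpow
      exact hp.not_dvd_one hpow
    rw [← sq]
    exact .inl ((pow_dvd_pow p (by lia)).trans (Nat.ordProj_dvd n p))
  · refine .inr ⟨q, hq', ((Nat.modEq_iff_dvd' hq'.one_le).2 hsub).symm, ?_⟩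
    have hlt : p < q := by
      have := Nat.le_of_dvd (Nat.sub_pos_of_lt hq'.one_lt) hsub
      have := hq'.pos
      lia
    exact ((Nat.coprime_primes hp hq').2 hlt.ne).mul_dvd_of_dvd_of_dvd hpn
      (Nat.dvd_of_mem_primeFactors hq)

end CyclicNumbers

section TuranKubilius

open Finset

/-- The integers in `[1, X]` without a divisor in `Q`: what remains after sifting by `Q`. -/
def sifted (Q : Finset ℕ) (X : ℕ) : Finset ℕ := {m ∈ Ioc 0 X | ∀ q ∈ Q, ¬ q ∣ m}

variable {Q : Finset ℕ} {X m : ℕ}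

lemma mem_sifted : m ∈ sifted Q X ↔ m ∈ Ioc 0 X ∧ ∀ q ∈ Q, ¬ q ∣ m := mem_filter

lemma card_filter_dvd_le (X d : ℕ) : (#{m ∈ Ioc 0 X | d ∣ m} : ℝ) ≤ X / d := by
  rw [Nat.Ioc_filter_dvd_card_eq_div]
  exact Nat.cast_div_le

lemma sub_one_le_card_filter_dvd (X d : ℕ) : (X / d - 1 : ℝ) ≤ #{m ∈ Ioc 0 X | d ∣ m} := by
  rw [Nat.Ioc_filter_dvd_card_eq_div, ← Nat.floor_div_eq_div (K := ℝ)]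
  exact (Nat.sub_one_lt_floor _).le

lemma le_sum_card_filter_dvd (Q : Finset ℕ) (X : ℕ) :
    X * ∑ q ∈ Q, (q : ℝ)⁻¹ - #Q ≤ ∑ m ∈ Ioc 0 X, (#{q ∈ Q | q ∣ m} : ℝ) := by
  calc
    X * ∑ q ∈ Q, (q : ℝ)⁻¹ - #Q = ∑ q ∈ Q, (X / q - 1 : ℝ) := by
      rw [sum_sub_distrib, mul_sum, sum_const, nsmul_one]
      rfl
    _ ≤ ∑ q ∈ Q, (#{m ∈ Ioc 0 X | q ∣ m} : ℝ) :=
      sum_le_sum fun q _ ↦ sub_one_le_card_filter_dvd X q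
    _ = ∑ m ∈ Ioc 0 X, (#{q ∈ Q | q ∣ m} : ℝ) := by
      exact_mod_cast sum_card_bipartiteAbove_eq_sum_card_bipartiteBelow (· ∣ ·)

lemma card_filter_dvd_and_dvd_le {q r : ℕ} (hqr : q ≠ r → q.Coprime r) :
    (#{m ∈ Ioc 0 X | q ∣ m ∧ r ∣ m} : ℝ) ≤
      X * ((q : ℝ)⁻¹ * (r : ℝ)⁻¹) + if q = r then X * (q : ℝ)⁻¹ else 0 := by
  by_cases h : q = r
  · subst h
    simp only [and_self, if_true]
    exact (card_filter_dvd_le X q).trans (le_add_of_nonneg_left (by positivity))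
  · rw [if_neg h, add_zero, ← mul_inv, ← Nat.cast_mul]
    have hdvd : ∀ m, q ∣ m ∧ r ∣ m ↔ q * r ∣ m := fun m ↦
      ⟨fun hm ↦ (hqr h).mul_dvd_of_dvd_of_dvd hm.1 hm.2,
        fun hm ↦ ⟨dvd_of_mul_right_dvd hm, dvd_of_mul_left_dvd hm⟩⟩
    simp only [hdvd]
    exact card_filter_dvd_le X (q * r)

lemma sum_sq_card_filter_dvd_le (hQ : (Q : Set ℕ).Pairwise Nat.Coprime) (X : ℕ) :
    ∑ m ∈ Ioc 0 X, (#{q ∈ Q | q ∣ m} : ℝ) ^ 2 ≤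
      X * (∑ q ∈ Q, (q : ℝ)⁻¹) ^ 2 + X * ∑ q ∈ Q, (q : ℝ)⁻¹ := by
  have hsq : ∀ m, (#{q ∈ Q | q ∣ m} : ℝ) ^ 2 =
      ∑ q ∈ Q, ∑ r ∈ Q, if q ∣ m ∧ r ∣ m then (1 : ℝ) else 0 := fun m ↦ by
    rw [← sum_boole, sq, sum_mul_sum]
    simp only [ite_and, ite_mul, one_mul, zero_mul]
  calc
    _ = ∑ q ∈ Q, ∑ r ∈ Q, (#{m ∈ Ioc 0 X | q ∣ m ∧ r ∣ m} : ℝ) := by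
      simp only [hsq]
      rw [sum_comm]
      simp only [← sum_boole]
      exact sum_congr rfl fun q _ ↦ sum_comm
    _ ≤ ∑ q ∈ Q, ∑ r ∈ Q, (X * ((q : ℝ)⁻¹ * (r : ℝ)⁻¹) + if q = r then X * (q : ℝ)⁻¹ else 0) :=
      sum_le_sum fun q hq ↦ sum_le_sum fun r hr ↦ card_filter_dvd_and_dvd_le (hQ hq hr)
    _ = _ := by
      rw [sq, sum_mul_sum, mul_sum, mul_sum, ← sum_add_distrib]
      refine sum_congr rfl fun q hq ↦ ?_
      rw [sum_add_distrib, ← mul_sum, sum_ite_eq, if_pos hq]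

-- Turán–Kubilius: a sifted integer has `0` divisors in `Q`, far from the mean `∑ q ∈ Q, q⁻¹`.
theorem card_sifted_mul_sum_inv_le (hQ : (Q : Set ℕ).Pairwise Nat.Coprime) (X : ℕ) :
    #(sifted Q X) * ∑ q ∈ Q, (q : ℝ)⁻¹ ≤ X + 2 * #Q := by
  set E := ∑ q ∈ Q, (q : ℝ)⁻¹
  have hE : 0 ≤ E := sum_nonneg fun _ _ ↦ by positivity
  rcases hE.eq_or_lt with hE | hE
  · rw [← hE, mul_zero]
    positivity
  refine le_of_mul_le_mul_right ?_ hE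
  have hsifted : #(sifted Q X) * E ^ 2 ≤ ∑ m ∈ Ioc 0 X, ((#{q ∈ Q | q ∣ m} : ℝ) - E) ^ 2 := calc
    #(sifted Q X) * E ^ 2 = ∑ m ∈ sifted Q X, ((#{q ∈ Q | q ∣ m} : ℝ) - E) ^ 2 := by
      rw [← nsmul_eq_mul, ← sum_const]
      refine sum_congr rfl fun m hm ↦ ?_
      rw [filter_false_of_mem (mem_sifted.1 hm).2, card_empty, Nat.cast_zero, zero_sub, neg_sq]
    _ ≤ _ := sum_le_sum_of_subset_of_nonneg (filter_subset _ _) fun _ _ _ ↦ sq_nonneg _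
  have hexpand : ∑ m ∈ Ioc 0 X, ((#{q ∈ Q | q ∣ m} : ℝ) - E) ^ 2 =
      ∑ m ∈ Ioc 0 X, (#{q ∈ Q | q ∣ m} : ℝ) ^ 2 -
        2 * E * ∑ m ∈ Ioc 0 X, (#{q ∈ Q | q ∣ m} : ℝ) + X * E ^ 2 := by
    simp only [sub_sq, sum_add_distrib, sum_sub_distrib, ← mul_sum, ← sum_mul, sum_const,
      Nat.card_Ioc, nsmul_eq_mul, tsub_zero]
    ring
  have hmean : 2 * E * (X * E - #Q) ≤ 2 * E * ∑ m ∈ Ioc 0 X, (#{q ∈ Q | q ∣ m} : ℝ) := by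
    gcongr
    exact le_sum_card_filter_dvd Q X
  linarith [sum_sq_card_filter_dvd_le hQ X]

lemma card_isCyclicNum_dvd_le {p : ℕ} (hp : p.Prime) (x z : ℕ) :
    #{n ∈ Ioc 0 x | IsCyclicNum n ∧ p ∣ n} ≤ #(sifted (primesOneMod p z) (x / p)) := by
  refine card_le_card_of_injOn (· / p) (fun n hn ↦ ?_) fun a ha b hb hab ↦ ?_
  · obtain ⟨hnx, hcyc, hpn⟩ := mem_filter.1 hn
    rw [mem_Ioc] at hnx
    refine mem_sifted.2 ⟨mem_Ioc.2 ⟨Nat.div_pos (Nat.le_of_dvd hnx.1 hpn) hp.pos,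
      Nat.div_le_div_right hnx.2⟩, fun q hq hqn ↦ ?_⟩
    obtain ⟨-, hq', hq1⟩ := mem_primesOneMod.1 hq
    exact hcyc.not_modEq_one hp hq' hpn (hqn.trans (Nat.div_dvd_of_dvd hpn)) hq1
  · exact (Nat.div_left_inj (mem_filter.1 ha).2.2 (mem_filter.1 hb).2.2).1 hab

theorem card_isCyclicNum_dvd_mul_sum_le {p x z : ℕ} (hp : p.Prime) (hz : z ≤ x / p) :
    #{n ∈ Ioc 0 x | IsCyclicNum n ∧ p ∣ n} * ∑ q ∈ primesOneMod p z, (q : ℝ)⁻¹ ≤ 3 * x / p := by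
  have hcop : (primesOneMod p z : Set ℕ).Pairwise Nat.Coprime := fun q hq r hr ↦
    (Nat.coprime_primes (mem_primesOneMod.1 hq).2.1 (mem_primesOneMod.1 hr).2.1).2
  have hcard : #(primesOneMod p z) ≤ x / p := by
    have hsub : primesOneMod p z ⊆ Ioc 0 z := fun q hq ↦ by
      obtain ⟨hqz, hq, -⟩ := mem_primesOneMod.1 hq
      exact mem_Ioc.2 ⟨hq.pos, hqz⟩
    exact (card_le_card hsub).trans (by rwa [Nat.card_Ioc, tsub_zero])
  calc
    _ ≤ #(sifted (primesOneMod p z) (x / p)) * ∑ q ∈ primesOneMod p z, (q : ℝ)⁻¹ := by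
      have := card_isCyclicNum_dvd_le hp x z
      gcongr
    _ ≤ (x / p : ℕ) + 2 * (#(primesOneMod p z) : ℝ) := card_sifted_mul_sum_inv_le hcop _
    _ ≤ (x / p : ℕ) + 2 * ((x / p : ℕ) : ℝ) := by gcongr
    _ = 3 * ((x / p : ℕ) : ℝ) := by ring
    _ ≤ 3 * (x / p : ℝ) := by
      gcongr
      exact Nat.cast_div_le
    _ = 3 * x / p := by ring

end TuranKubilius

section PrimesInProgression

open Finset

variable {p N : ℕ}

lemma dvd_prod_range_mul_add_one {M : ℕ} (hM : M ∣ N.factorial) (hpM : p.Coprime M) :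
    M ∣ ∏ i ∈ range N, (p * (i + 1) + 1) := by
  have : NeZero M := ⟨ne_zero_of_dvd_ne_zero N.factorial_ne_zero hM⟩
  -- Modulo `M` the product is `p ^ N` times `N` consecutive integers, because `p` is invertible.
  set u := ((p : ZMod M)⁻¹).val
  have hpu : (p : ZMod M) * u = 1 := by
    rw [ZMod.natCast_zmod_val, ZMod.coe_mul_inv_eq_one p hpM]
  have hprod : ((∏ i ∈ range N, (p * (i + 1) + 1) : ℕ) : ZMod M) =
      (p : ZMod M) ^ N * ((u + 1).ascFactorial N : ℕ) := by
    rw [Nat.ascFactorial_eq_prod_range, ← card_range N, ← prod_const, card_range]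
    push_cast
    rw [← prod_mul_distrib]
    refine prod_congr rfl fun i _ ↦ ?_
    rw [← hpu]
    ring
  rw [← ZMod.natCast_eq_zero_iff, hprod,
    (ZMod.natCast_eq_zero_iff _ _).2 (hM.trans (Nat.factorial_dvd_ascFactorial _ _)), mul_zero]

lemma prod_range_mul_add_one_le (p N : ℕ) :
    ∏ i ∈ range N, (p * (i + 1) + 1) ≤ (p + 1) ^ N * N.factorial := by
  calc
    ∏ i ∈ range N, (p * (i + 1) + 1) ≤ ∏ i ∈ range N, (p + 1) * (i + 1) :=
      prod_le_prod' fun i _ ↦ by lia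
    _ = (p + 1) ^ N * N.factorial := by
      rw [prod_mul_distrib, prod_const, card_range, prod_range_add_one_eq_factorial]

lemma exists_eq_mul_add_one_of_modEq_one {q : ℕ} (hq : 1 ≤ q) (h : q ≡ 1 [MOD p]) :
    ∃ m, q = p * m + 1 := by
  obtain ⟨m, hm⟩ := (Nat.modEq_iff_dvd' hq).1 h.symm
  exact ⟨m, by lia⟩

lemma prod_primes_dvd_prod_range {S : Finset ℕ} (hp : 0 < p)
    (hS : ∀ q ∈ S, q.Prime ∧ q ≡ 1 [MOD p] ∧ q ≤ p * N + 1) :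
    ∏ q ∈ S, q ∣ ∏ i ∈ range N, (p * (i + 1) + 1) := by
  refine prod_primes_dvd _ (fun q hq ↦ (hS q hq).1.prime) fun q hq ↦ ?_
  obtain ⟨hq_prime, hq1, hqN⟩ := hS q hq
  obtain ⟨m, rfl⟩ := exists_eq_mul_add_one_of_modEq_one hq_prime.one_le hq1
  have hmN : m ≤ N := Nat.le_of_mul_le_mul_left (by lia) hp
  have hm0 : m ≠ 0 := by
    rintro rfl
    exact Nat.not_prime_one (by simpa only [mul_zero, zero_add] using hq_prime)
  obtain ⟨i, rfl⟩ := Nat.exists_eq_succ_of_ne_zero hm0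
  exact dvd_prod_of_mem (fun i ↦ p * (i + 1) + 1) (mem_range.2 hmN)

-- Both the `p`-free part of `N!` and the primes of `S` divide `∏ i < N, (p (i + 1) + 1)`, and they
-- are coprime because those primes exceed `N`.
lemma prod_primes_modEq_one_le {S : Finset ℕ} (hp : p.Prime)
    (hS : ∀ q ∈ S, q.Prime ∧ q ≡ 1 [MOD p] ∧ N < q ∧ q ≤ p * N + 1) :
    ∏ q ∈ S, q ≤ (p * (p + 1)) ^ N := by
  set v := N.factorial.factorization p
  set M := N.factorial / p ^ v
  have hfac : p ^ v * M = N.factorial := Nat.ordProj_mul_ordCompl_eq_self _ _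
  have hMfac : M ∣ N.factorial := Dvd.intro_left _ hfac
  have hM : M ∣ ∏ i ∈ range N, (p * (i + 1) + 1) :=
    dvd_prod_range_mul_add_one hMfac (Nat.coprime_ordCompl hp N.factorial_ne_zero)
  have hSdvd : ∏ q ∈ S, q ∣ ∏ i ∈ range N, (p * (i + 1) + 1) :=
    prod_primes_dvd_prod_range hp.pos fun q hq ↦
      ⟨(hS q hq).1, (hS q hq).2.1, (hS q hq).2.2.2⟩
  have hcop : (∏ q ∈ S, q).Coprime M := Nat.Coprime.prod_left fun q hq ↦
    (hS q hq).1.coprime_iff_not_dvd.2 fun hqM ↦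
      (hS q hq).2.2.1.not_ge ((hS q hq).1.dvd_factorial.1 (hqM.trans hMfac))
  have hv : v ≤ N :=
    (Nat.factorization_factorial_le_div_pred hp N).trans (Nat.div_le_self _ _)
  refine Nat.le_of_mul_le_mul_right ?_ (Nat.pos_of_dvd_of_pos hMfac N.factorial_pos)
  calc
    (∏ q ∈ S, q) * M ≤ ∏ i ∈ range N, (p * (i + 1) + 1) :=
      Nat.le_of_dvd (prod_pos fun _ _ ↦ Nat.succ_pos _) (hcop.mul_dvd_of_dvd_of_dvd hSdvd hM)
    _ ≤ (p + 1) ^ N * (p ^ v * M) := hfac ▸ prod_range_mul_add_one_le p N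
    _ ≤ (p + 1) ^ N * (p ^ N * M) := by
      gcongr
      exact hp.one_le
    _ = (p * (p + 1)) ^ N * M := by
      rw [mul_pow]
      ring

lemma card_mul_le_of_dyadic {j : ℕ} {S : Finset ℕ} (hp : p.Prime)
    (hS : ∀ q ∈ S, q.Prime ∧ q ≡ 1 [MOD p] ∧ 2 ^ j * p < q ∧ q ≤ p * 2 ^ (j + 1) + 1) :
    (#S * (j + 1) : ℝ) ≤ 9 * log p * 2 ^ j := by
  have hlt : ∀ q ∈ S, 2 ^ (j + 1) < q := fun q hq ↦ calc
    2 ^ (j + 1) = 2 ^ j * 2 := pow_succ 2 j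
    _ ≤ 2 ^ j * p := Nat.mul_le_mul_left _ hp.two_le
    _ < q := (hS q hq).2.2.1
  have hpow : (2 ^ (j + 1)) ^ #S ≤ (p ^ 3) ^ 2 ^ (j + 1) := calc
    (2 ^ (j + 1)) ^ #S ≤ ∏ q ∈ S, q := pow_card_le_prod _ _ _ fun q hq ↦ (hlt q hq).le
    _ ≤ (p * (p + 1)) ^ 2 ^ (j + 1) := prod_primes_modEq_one_le hp fun q hq ↦
      ⟨(hS q hq).1, (hS q hq).2.1, hlt q hq, (hS q hq).2.2.2⟩
    _ ≤ (p ^ 3) ^ 2 ^ (j + 1) := by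
      gcongr
      nlinarith [hp.two_le, Nat.mul_le_mul hp.two_le hp.two_le]
  have hlog := log_le_log (by positivity) (Nat.cast_le (α := ℝ).2 hpow)
  push_cast [log_pow] at hlog
  have hlog2 := log_two_gt_d9
  have hcard : (#S * (j + 1) : ℝ) * (2 / 3) ≤ #S * (j + 1) * log 2 := by
    gcongr
    linarith
  rw [pow_succ] at hlog
  linarith

lemma sum_inv_le_of_dyadic {j : ℕ} {S : Finset ℕ} (hp : p.Prime)
    (hS : ∀ q ∈ S, q.Prime ∧ q ≡ 1 [MOD p] ∧ 2 ^ j * p < q ∧ q ≤ p * 2 ^ (j + 1) + 1) :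
    ∑ q ∈ S, (q : ℝ)⁻¹ ≤ 9 * log p / p * ((j : ℝ) + 1)⁻¹ := by
  have hp0 : (0 : ℝ) < p := by exact_mod_cast hp.pos
  calc
    ∑ q ∈ S, (q : ℝ)⁻¹ ≤ #S • (2 ^ j * p : ℝ)⁻¹ := sum_le_card_nsmul _ _ _ fun q hq ↦
      inv_anti₀ (by positivity) (by exact_mod_cast (hS q hq).2.2.1.le)
    _ = #S * (j + 1) * (2 ^ j * p * (j + 1) : ℝ)⁻¹ := by
      rw [nsmul_eq_mul]
      field_simp
    _ ≤ 9 * log p * 2 ^ j * (2 ^ j * p * (j + 1) : ℝ)⁻¹ := by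
      have := card_mul_le_of_dyadic hp hS
      gcongr
    _ = 9 * log p / p * ((j : ℝ) + 1)⁻¹ := by field_simp

lemma exists_eq_mul_add_one_of_mem_primesOneMod {q x : ℕ} (hp : p.Prime) (hp2 : p ≠ 2)
    (hq : q ∈ primesOneMod p x) : ∃ m, 2 ≤ m ∧ q = p * m + 1 := by
  obtain ⟨-, hq_prime, hq1⟩ := mem_primesOneMod.1 hq
  obtain ⟨m, rfl⟩ := exists_eq_mul_add_one_of_modEq_one hq_prime.one_le hq1
  refine ⟨m, (Nat.two_le_iff m).2 ⟨?_, ?_⟩, rfl⟩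
  · rintro rfl
    exact Nat.not_prime_one (by simpa only [mul_zero, zero_add] using hq_prime)
  · rintro rfl
    rw [mul_one] at hq_prime
    have hodd := hq_prime.odd_of_ne_two (by have := hp.two_le; lia)
    exact Nat.not_even_iff_odd.2 hodd (hp.odd_of_ne_two hp2).add_one

-- A weak Brun–Titchmarsh inequality, summed over dyadic ranges of `(q - 1) / p`.
theorem sum_primesOneMod_inv_le {x J : ℕ} (hp : p.Prime) (hp2 : p ≠ 2) (hJ : x ≤ 2 ^ J) :
    ∑ q ∈ primesOneMod p x, (q : ℝ)⁻¹ ≤ 9 * log p / p * (1 + log J) := by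
  let level : ℕ → ℕ := fun q ↦ Nat.log 2 ((q - 1) / p - 1)
  have hlevel : ∀ m, level (p * m + 1) = Nat.log 2 (m - 1) := fun m ↦ by
    simp only [level, add_tsub_cancel_right, Nat.mul_div_cancel_left _ hp.pos]
  have hmaps : ∀ q ∈ primesOneMod p x, level q ∈ range J := fun q hq ↦ by
    obtain ⟨m, hm, rfl⟩ := exists_eq_mul_add_one_of_mem_primesOneMod hp hp2 hq
    rw [hlevel, mem_range]
    refine Nat.log_lt_of_lt_pow (by lia) (lt_of_lt_of_le ?_ hJ)
    have hmx := (mem_primesOneMod.1 hq).1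
    have := Nat.le_mul_of_pos_left m hp.pos
    lia
  have hfiber : ∀ j ∈ range J, ∑ q ∈ primesOneMod p x with level q = j, (q : ℝ)⁻¹ ≤
      9 * log p / p * ((j : ℝ) + 1)⁻¹ := fun j _ ↦ by
    refine sum_inv_le_of_dyadic hp fun q hq ↦ ?_
    obtain ⟨hq, hqj⟩ := mem_filter.1 hq
    obtain ⟨m, hm, rfl⟩ := exists_eq_mul_add_one_of_mem_primesOneMod hp hp2 hq
    obtain ⟨-, hq_prime, hq1⟩ := mem_primesOneMod.1 hq
    rw [hlevel, Nat.log_eq_iff (.inr ⟨one_lt_two, by lia⟩)] at hqj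
    have hlower : p * 2 ^ j ≤ p * m := by gcongr; lia
    have hupper : p * m ≤ p * 2 ^ (j + 1) := by gcongr; lia
    exact ⟨hq_prime, hq1, by lia, by lia⟩
  calc
    _ = ∑ j ∈ range J, ∑ q ∈ primesOneMod p x with level q = j, (q : ℝ)⁻¹ :=
      (sum_fiberwise_of_maps_to hmaps _).symm
    _ ≤ ∑ j ∈ range J, 9 * log p / p * ((j : ℝ) + 1)⁻¹ := sum_le_sum hfiber
    _ = 9 * log p / p * (harmonic J : ℝ) := by
      rw [← mul_sum, harmonic]
      push_cast
      rfl
    _ ≤ 9 * log p / p * (1 + log J) := by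
      gcongr
      exact harmonic_le_one_add_log J

end PrimesInProgression

section RoughNumbers

open Finset

lemma log_add_one_div_sq_le {n : ℕ} (hn : 1 ≤ n) :
    log (n + 1) / (n + 1) ^ 2 ≤ (log n + 2) / n - (log (n + 1) + 2) / (n + 1) := by
  have hn1 : (1 : ℝ) ≤ n := by exact_mod_cast hn
  have hlog : log (n + 1) - 1 / n ≤ log n := by
    have hratio := log_le_sub_one_of_pos (by positivity : 0 < ((n : ℝ) + 1) / n)
    rw [log_div (by positivity) (by positivity), add_div, div_self (by positivity)] at hratio
    linarith
  have hnonneg : 0 ≤ log ((n : ℝ) + 1) := log_nonneg (by linarith)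
  set l := log ((n : ℝ) + 1)
  have hdiff : (l - 1 / n + 2) / n - (l + 2) / (n + 1) - l / (n + 1) ^ 2 =
      ((n - 1) * (n + 1) + l * n) / (n ^ 2 * (n + 1) ^ 2) := by
    field_simp
    ring
  have hdiff_nonneg : 0 ≤ ((n - 1) * (n + 1) + l * n) / ((n : ℝ) ^ 2 * (n + 1) ^ 2) := by
    have : 0 ≤ (n : ℝ) - 1 := by linarith
    positivity
  have hmono : (l - 1 / n + 2) / n ≤ (log n + 2) / n := by gcongr
  linarith

lemma sum_Ioc_log_div_sq_le {Y : ℕ} (hY : 1 ≤ Y) (x : ℕ) :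
    ∑ n ∈ Ioc Y x, log n / (n : ℝ) ^ 2 ≤ (log Y + 2) / Y := by
  have hnonneg : ∀ n : ℕ, 0 ≤ (log n + 2) / n := fun n ↦ by
    have := log_natCast_nonneg n
    positivity
  rcases le_total x Y with hxY | hxY
  · rw [Ioc_eq_empty hxY.not_gt, sum_empty]
    exact hnonneg Y
  have htelescope : ∑ n ∈ Ioc Y x, log n / (n : ℝ) ^ 2 ≤ (log Y + 2) / Y - (log x + 2) / x := by
    induction x, hxY using Nat.le_induction with
    | base => rw [Ioc_self, sum_empty, sub_self]
    | succ x hx ih =>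
      rw [sum_Ioc_succ_top (by lia)]
      have hstep := log_add_one_div_sq_le (hY.trans hx)
      push_cast
      linarith
  linarith [hnonneg x]

lemma filter_not_isCyclicNum_sifted_subset (Y x : ℕ) :
    {n ∈ sifted (Nat.primesLE Y) x | ¬ IsCyclicNum n} ⊆
      {p ∈ Ioc Y x | p.Prime}.biUnion fun p ↦ {m ∈ Ioc 0 x | p * p ∣ m} ∪
        (primesOneMod p x).biUnion fun q ↦ {m ∈ Ioc 0 x | p * q ∣ m} := by
  intro n hn
  obtain ⟨hn, hcyc⟩ := mem_filter.1 hn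
  obtain ⟨hnx, hrough⟩ := mem_sifted.1 hn
  obtain ⟨hn0, hn_le⟩ := mem_Ioc.1 hnx
  obtain ⟨p, hp, h⟩ := exists_prime_mul_dvd_of_not_isCyclicNum hn0 hcyc
  have hpn : p ∣ n := by
    rcases h with h | ⟨q, _, _, h⟩ <;> exact dvd_of_mul_right_dvd h
  have hYp : Y < p := not_le.1 fun hpY ↦ hrough p (Nat.mem_primesLE.2 ⟨hpY, hp⟩) hpn
  have hpx : p ≤ x := (Nat.le_of_dvd hn0 hpn).trans hn_le
  refine mem_biUnion.2 ⟨p, mem_filter.2 ⟨mem_Ioc.2 ⟨hYp, hpx⟩, hp⟩, mem_union.2 ?_⟩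
  refine h.imp (fun h ↦ mem_filter.2 ⟨hnx, h⟩) fun ⟨q, hq, hq1, h⟩ ↦ mem_biUnion.2 ⟨q, ?_, ?_⟩
  · have hqx := (Nat.le_of_dvd hn0 (dvd_of_mul_left_dvd h)).trans hn_le
    exact mem_primesOneMod.2 ⟨hqx, hq, hq1⟩
  · exact mem_filter.2 ⟨hnx, h⟩

lemma card_filter_sq_dvd_add_le {p x J : ℕ} (hp : p.Prime) (hp3 : 3 ≤ p) (hJ : x ≤ 2 ^ J) :
    (#{m ∈ Ioc 0 x | p * p ∣ m} : ℝ) + ∑ q ∈ primesOneMod p x, (#{m ∈ Ioc 0 x | p * q ∣ m} : ℝ) ≤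
      x * (1 + 9 * (1 + log J)) * (log p / p ^ 2) := by
  have hlogp : 1 ≤ log p := by
    have : (3 : ℝ) ≤ p := by exact_mod_cast hp3
    rw [le_log_iff_exp_le (by linarith)]
    linarith [exp_one_lt_d9]
  have hsquare : (#{m ∈ Ioc 0 x | p * p ∣ m} : ℝ) ≤ x * (log p / p ^ 2) := calc
    (#{m ∈ Ioc 0 x | p * p ∣ m} : ℝ) ≤ x * (1 / p ^ 2) := by
      rw [mul_one_div, sq, ← Nat.cast_mul]
      exact card_filter_dvd_le x (p * p)
    _ ≤ x * (log p / p ^ 2) := by gcongr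
  have hprod : ∑ q ∈ primesOneMod p x, (#{m ∈ Ioc 0 x | p * q ∣ m} : ℝ) ≤
      x * (9 * (1 + log J)) * (log p / p ^ 2) := calc
    _ ≤ ∑ q ∈ primesOneMod p x, (x / p : ℝ) * (q : ℝ)⁻¹ := sum_le_sum fun q _ ↦ by
      rw [← div_eq_mul_inv, div_div, ← Nat.cast_mul]
      exact card_filter_dvd_le x (p * q)
    _ ≤ (x / p : ℝ) * (9 * log p / p * (1 + log J)) := by
      rw [← mul_sum]
      gcongr
      exact sum_primesOneMod_inv_le hp (by lia) hJ
    _ = _ := by ring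
  linarith

theorem card_not_isCyclicNum_sifted_le {Y x J : ℕ} (hY : 2 ≤ Y) (hJ : x ≤ 2 ^ J) :
    (#{n ∈ sifted (Nat.primesLE Y) x | ¬ IsCyclicNum n} : ℝ) ≤
      x * (1 + 9 * (1 + log J)) * ((log Y + 2) / Y) := by
  have : 0 ≤ log J := log_natCast_nonneg J
  calc
    _ ≤ ∑ p ∈ Ioc Y x with p.Prime, ((#{m ∈ Ioc 0 x | p * p ∣ m} : ℝ) +
        ∑ q ∈ primesOneMod p x, (#{m ∈ Ioc 0 x | p * q ∣ m} : ℝ)) := by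
      refine mod_cast (card_le_card (filter_not_isCyclicNum_sifted_subset Y x)).trans
        (card_biUnion_le.trans (sum_le_sum fun p _ ↦ (card_union_le _ _).trans ?_))
      gcongr
      exact card_biUnion_le
    _ ≤ ∑ p ∈ Ioc Y x with p.Prime, x * (1 + 9 * (1 + log J)) * (log p / p ^ 2) :=
      sum_le_sum fun p hp ↦ by
        obtain ⟨hpY, hp⟩ := mem_filter.1 hp
        exact card_filter_sq_dvd_add_le hp (hY.trans_lt (mem_Ioc.1 hpY).1) hJ
    _ ≤ ∑ p ∈ Ioc Y x, x * (1 + 9 * (1 + log J)) * (log p / p ^ 2) :=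
      sum_le_sum_of_subset_of_nonneg (filter_subset _ _) fun p _ _ ↦ by
        have := log_natCast_nonneg p
        positivity
    _ ≤ _ := by
      rw [← mul_sum]
      gcongr
      exact sum_Ioc_log_div_sq_le (by lia) x

end RoughNumbers

section LegendreSieve

open Finset

lemma one_sub_sum_le_prod_one_sub {ι R : Type*} [CommRing R] [LinearOrder R]
    [IsStrictOrderedRing R] (s : Finset ι) {f : ι → R} (h0 : ∀ i ∈ s, 0 ≤ f i)
    (h1 : ∀ i ∈ s, f i ≤ 1) : 1 - ∑ i ∈ s, f i ≤ ∏ i ∈ s, (1 - f i) := by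
  induction s using Finset.cons_induction with
  | empty => simp
  | cons i s hi ih =>
    rw [forall_mem_cons] at h0 h1
    have hle : ∏ j ∈ s, (1 - f j) ≤ 1 :=
      prod_le_one (fun j hj ↦ sub_nonneg.2 (h1.2 j hj)) fun j hj ↦ sub_le_self _ (h0.2 j hj)
    rw [sum_cons, prod_cons]
    linarith [ih h0.2 h1.2, mul_le_of_le_one_right h0.1 hle]

variable {Q : Finset ℕ}

lemma one_sub_inv_natCast_nonneg (n : ℕ) : 0 ≤ 1 - (n : ℝ)⁻¹ :=
  sub_nonneg.2 (Nat.cast_inv_le_one n)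

lemma prod_one_sub_inv_le_one (Q : Finset ℕ) : ∏ q ∈ Q, (1 - (q : ℝ)⁻¹) ≤ 1 :=
  prod_le_one (fun q _ ↦ one_sub_inv_natCast_nonneg q) fun q _ ↦ sub_le_self _ (by positivity)

lemma card_sifted_cons_add {q : ℕ} (hq : q ∉ Q) (hq0 : 0 < q) (hcop : ∀ r ∈ Q, r.Coprime q)
    (X : ℕ) : #(sifted (cons q Q hq) X) + #(sifted Q (X / q)) = #(sifted Q X) := by
  rw [← card_filter_add_card_filter_not (s := sifted Q X) fun n ↦ ¬ q ∣ n]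
  congr 1
  · congr 1
    ext n
    simp only [sifted, mem_filter, forall_mem_cons]
    tauto
  · refine card_bij (fun m _ ↦ q * m) (fun m hm ↦ ?_)
      (fun a _ b _ hab ↦ Nat.eq_of_mul_eq_mul_left hq0 hab) fun n hn ↦ ?_
    · obtain ⟨hmX, hm⟩ := mem_sifted.1 hm
      obtain ⟨hm0, hmX⟩ := mem_Ioc.1 hmX
      refine mem_filter.2 ⟨mem_sifted.2 ⟨mem_Ioc.2 ⟨Nat.mul_pos hq0 hm0, ?_⟩, fun r hr hrm ↦ ?_⟩,
        not_not.2 (dvd_mul_right q m)⟩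
      · exact (Nat.mul_le_mul_left q hmX).trans (Nat.mul_div_le X q)
      · exact hm r hr ((hcop r hr).dvd_of_dvd_mul_left hrm)
    · obtain ⟨hnX, hqn⟩ := mem_filter.1 hn
      obtain ⟨m, rfl⟩ := not_not.1 hqn
      obtain ⟨hnX, hn⟩ := mem_sifted.1 hnX
      obtain ⟨hm0, hmX⟩ := mem_Ioc.1 hnX
      refine ⟨m, mem_sifted.2 ⟨mem_Ioc.2 ⟨Nat.pos_of_mul_pos_left hm0, ?_⟩,
        fun r hr hrm ↦ hn r hr (hrm.mul_left q)⟩, rfl⟩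
      rwa [Nat.le_div_iff_mul_le hq0, mul_comm]

theorem abs_card_sifted_sub_le (hQ0 : ∀ q ∈ Q, 0 < q) (hQ : (Q : Set ℕ).Pairwise Nat.Coprime)
    (X : ℕ) : |#(sifted Q X) - X * ∏ q ∈ Q, (1 - (q : ℝ)⁻¹)| ≤ 2 ^ #Q - 1 := by
  induction Q using Finset.cons_induction generalizing X with
  | empty => simp [sifted]
  | cons q Q hq ih =>
    rw [forall_mem_cons] at hQ0
    rw [coe_cons, Set.pairwise_insert_of_symm_of_notMem hq] at hQ
    have hX := abs_le.1 (ih hQ0.2 hQ.1 X)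
    have hXq := abs_le.1 (ih hQ0.2 hQ.1 (X / q))
    have hG0 : 0 ≤ ∏ r ∈ Q, (1 - (r : ℝ)⁻¹) := prod_nonneg fun r _ ↦ one_sub_inv_natCast_nonneg r
    have hG1 := prod_one_sub_inv_le_one Q
    have hcard := card_sifted_cons_add hq hQ0.1 (fun r hr ↦ (hQ.2 r hr).symm) X
    have hcard : (#(sifted (cons q Q hq) X) + #(sifted Q (X / q)) : ℝ) = #(sifted Q X) := by
      exact_mod_cast hcard
    have hfloor_le : ((X / q : ℕ) : ℝ) ≤ X * (q : ℝ)⁻¹ := Nat.cast_div_le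
    have hle_floor : X * (q : ℝ)⁻¹ - 1 ≤ ((X / q : ℕ) : ℝ) := by
      rw [← div_eq_mul_inv, ← Nat.floor_div_eq_div (K := ℝ)]
      exact (Nat.sub_one_lt_floor _).le
    rw [prod_cons, card_cons, pow_succ, abs_le]
    constructor <;> nlinarith

end LegendreSieve

section MertensProduct

open Finset

lemma sum_Ioc_two_pow_inv_le {j : ℕ} (hj : 0 < j) :
    ∑ p ∈ Ioc (2 ^ j : ℕ) (2 ^ (j + 1)) with p.Prime, (p : ℝ)⁻¹ ≤ 4 * (j : ℝ)⁻¹ := by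
  have hterm : ∀ p ∈ {p ∈ Ioc (2 ^ j : ℕ) (2 ^ (j + 1)) | p.Prime},
      (p : ℝ)⁻¹ ≤ log p / (2 ^ j * (j * log 2)) := fun p hp ↦ by
    obtain ⟨hpj, hp⟩ := mem_filter.1 hp
    have hp2 : (2 : ℝ) ^ j ≤ p := by exact_mod_cast (mem_Ioc.1 hpj).1.le
    have hlog : j * log 2 ≤ log p := by
      rw [← log_pow]
      exact log_le_log (by positivity) hp2
    have hp0 : (0 : ℝ) < p := by exact_mod_cast hp.pos
    rw [inv_eq_one_div, div_le_div_iff₀ hp0 (by positivity), one_mul, mul_comm (log p)]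
    gcongr
  calc
    _ ≤ ∑ p ∈ Ioc (2 ^ j : ℕ) (2 ^ (j + 1)) with p.Prime, log p / (2 ^ j * (j * log 2)) :=
      sum_le_sum hterm
    _ ≤ Chebyshev.theta ((2 ^ (j + 1) : ℕ) : ℝ) / (2 ^ j * (j * log 2)) := by
      rw [← sum_div, Chebyshev.theta, Nat.floor_natCast]
      gcongr
      exact Nat.zero_le _
    _ ≤ log 4 * (2 ^ (j + 1) : ℕ) / (2 ^ j * (j * log 2)) := by
      gcongr
      exact Chebyshev.theta_le_log4_mul_x (by positivity)
    _ = 4 * (j : ℝ)⁻¹ := by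
      rw [show (4 : ℝ) = 2 ^ 2 by norm_num, log_pow]
      push_cast
      field_simp
      ring

lemma sum_Ioc_two_pow_two_pow_inv_le {a b : ℕ} (ha : 0 < a) (hab : a ≤ b) :
    ∑ p ∈ Ioc (2 ^ a : ℕ) (2 ^ b) with p.Prime, (p : ℝ)⁻¹ ≤ 4 * ∑ j ∈ Ico a b, (j : ℝ)⁻¹ := by
  induction b, hab using Nat.le_induction with
  | base => simp
  | succ b hab ih =>
    have hdyadic := sum_Ioc_two_pow_inv_le (ha.trans_le hab)
    rw [sum_filter] at ih hdyadic ⊢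
    rw [← sum_Ioc_consecutive _ (Nat.pow_le_pow_right two_pos hab)
      (Nat.pow_le_pow_right two_pos b.le_succ), sum_Ico_succ_top hab, mul_add]
    exact add_le_add ih hdyadic

/-- The Mertens product `∏ (1 - 1/p)` over the primes `p ≤ Y`: the density of the integers without
prime factor up to `Y`. -/
noncomputable def mertensProduct (Y : ℕ) : ℝ := ∏ p ∈ Nat.primesLE Y, (1 - (p : ℝ)⁻¹)

lemma inv_natCast_le_half_of_prime {p : ℕ} (hp : p.Prime) : (p : ℝ)⁻¹ ≤ 1 / 2 := by
  rw [one_div]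
  exact inv_anti₀ two_pos (by exact_mod_cast hp.two_le)

lemma mertensProduct_pos (Y : ℕ) : 0 < mertensProduct Y := prod_pos fun p hp ↦ by
  linarith [inv_natCast_le_half_of_prime (Nat.prime_of_mem_primesLE hp)]

lemma mertensProduct_mul_prod_Ioc {a b : ℕ} (hab : a ≤ b) :
    mertensProduct a * ∏ p ∈ Ioc a b with p.Prime, (1 - (p : ℝ)⁻¹) = mertensProduct b := by
  simp only [mertensProduct, Nat.primesLE_eq_filter_Ioc_zero, prod_filter]
  exact prod_Ioc_consecutive _ (Nat.zero_le a) hab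

lemma mertensProduct_two_pow_mul_le {a b : ℕ} (ha : 0 < a) (hab : a ≤ b) :
    mertensProduct (2 ^ a) * (1 - 4 * (b - a) / a) ≤ mertensProduct (2 ^ b) := by
  rw [← mertensProduct_mul_prod_Ioc (Nat.pow_le_pow_right two_pos hab)]
  refine mul_le_mul_of_nonneg_left ?_ (mertensProduct_pos _).le
  refine le_trans ?_ (one_sub_sum_le_prod_one_sub _ (fun p _ ↦ by positivity)
    fun p _ ↦ Nat.cast_inv_le_one p)
  refine sub_le_sub_left ((sum_Ioc_two_pow_two_pow_inv_le ha hab).trans ?_) 1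
  rw [mul_div_assoc]
  gcongr
  calc
    ∑ j ∈ Ico a b, (j : ℝ)⁻¹ ≤ #(Ico a b) • (a : ℝ)⁻¹ := sum_le_card_nsmul _ _ _ fun j hj ↦
      inv_anti₀ (by positivity) (by exact_mod_cast (mem_Ico.1 hj).1)
    _ = (b - a) / a := by rw [Nat.card_Ico, nsmul_eq_mul, Nat.cast_sub hab, div_eq_mul_inv]

lemma sum_primesLE_two_pow_inv_le {b : ℕ} (hb : 0 < b) :
    ∑ p ∈ Nat.primesLE (2 ^ b), (p : ℝ)⁻¹ ≤ 1 / 2 + 4 * (1 + log b) := by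
  have htwo : ∑ p ∈ Ioc 0 (2 ^ 1 : ℕ) with p.Prime, (p : ℝ)⁻¹ = 1 / 2 := by
    rw [show {p ∈ Ioc 0 (2 ^ 1) | p.Prime} = {2} by decide, sum_singleton]
    norm_num
  have hrest : ∑ p ∈ Ioc (2 ^ 1 : ℕ) (2 ^ b) with p.Prime, (p : ℝ)⁻¹ ≤ 4 * (1 + log b) := by
    refine (sum_Ioc_two_pow_two_pow_inv_le one_pos hb).trans ?_
    have hharmonic := harmonic_le_one_add_log b
    rw [harmonic_eq_sum_Icc] at hharmonic
    push_cast at hharmonic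
    gcongr
    exact (sum_le_sum_of_subset_of_nonneg Ico_subset_Icc_self fun j _ _ ↦ by positivity).trans
      hharmonic
  rw [Nat.primesLE_eq_filter_Ioc_zero]
  rw [sum_filter] at htwo hrest ⊢
  rw [← sum_Ioc_consecutive _ (Nat.zero_le (2 ^ 1)) (Nat.pow_le_pow_right two_pos hb), htwo]
  linarith

theorem exp_neg_div_pow_le_mertensProduct {b : ℕ} (hb : 0 < b) :
    exp (-9) / b ^ 8 ≤ mertensProduct (2 ^ b) := by
  have hb0 : (0 : ℝ) < b := by exact_mod_cast hb
  have hterm : ∀ p ∈ Nat.primesLE (2 ^ b), exp (-(2 * (p : ℝ)⁻¹)) ≤ 1 - (p : ℝ)⁻¹ := fun p hp ↦ by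
    have hhalf := inv_natCast_le_half_of_prime (Nat.prime_of_mem_primesLE hp)
    have hnonneg : 0 ≤ (p : ℝ)⁻¹ := by positivity
    rw [exp_neg, inv_le_iff_one_le_mul₀' (exp_pos _)]
    nlinarith [add_one_le_exp (2 * (p : ℝ)⁻¹)]
  calc
    exp (-9) / b ^ 8 = exp (-9 - 8 * log b) := by
      rw [exp_sub, mul_comm, exp_mul, exp_log hb0]
      norm_cast
    _ ≤ exp (-(2 * ∑ p ∈ Nat.primesLE (2 ^ b), (p : ℝ)⁻¹)) := by
      have := sum_primesLE_two_pow_inv_le hb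
      gcongr
      linarith
    _ ≤ mertensProduct (2 ^ b) := by
      rw [mul_sum, ← sum_neg_distrib, exp_sum]
      exact prod_le_prod (fun _ _ ↦ (exp_pos _).le) hterm

end MertensProduct

section CyclicCountBounds

open Finset

lemma cyclicCount_natCast (X : ℕ) : cyclicCount X = #{n ∈ Ioc 0 X | IsCyclicNum n} := by
  rw [cyclicCount, Nat.floor_natCast]
  congr 1
  ext n
  simp only [mem_filter, mem_range, Nat.lt_succ_iff, mem_Ioc]
  exact ⟨fun h ↦ ⟨⟨h.2.1, h.1⟩, h.2⟩, fun h ↦ ⟨h.1.2, h.2⟩⟩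

lemma card_primesLE_le (Y : ℕ) : #(Nat.primesLE Y) ≤ Y := by
  rw [Nat.primesLE_eq_filter_Ioc_zero]
  exact (card_filter_le _ _).trans_eq (Nat.card_Ioc 0 Y)

lemma abs_card_sifted_primesLE_sub_le (Y X : ℕ) :
    |#(sifted (Nat.primesLE Y) X) - X * mertensProduct Y| ≤ 2 ^ Y := by
  have hprime : ∀ p ∈ Nat.primesLE Y, p.Prime := fun p ↦ Nat.prime_of_mem_primesLE
  have hpow : (2 : ℝ) ^ #(Nat.primesLE Y) ≤ 2 ^ Y :=
    pow_le_pow_right₀ one_le_two (card_primesLE_le Y)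
  have hlegendre := abs_card_sifted_sub_le (fun p hp ↦ (hprime p hp).pos)
    (fun p hp q hq hpq ↦ (Nat.coprime_primes (hprime p hp) (hprime q hq)).2 hpq) X
  exact hlegendre.trans (by linarith)

variable {X N : ℕ}

lemma card_sifted_le_cyclicCount_add (Q : Finset ℕ) (hX : X ≤ N) :
    #(sifted Q X) ≤ cyclicCount X + #{n ∈ sifted Q N | ¬ IsCyclicNum n} := by
  rw [cyclicCount_natCast]
  refine (card_le_card fun n hn ↦ ?_).trans (card_union_le _ _)
  obtain ⟨hnX, hnQ⟩ := mem_sifted.1 hn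
  by_cases hn : IsCyclicNum n
  · exact mem_union_left _ (mem_filter.2 ⟨hnX, hn⟩)
  · exact mem_union_right _
      (mem_filter.2 ⟨mem_sifted.2 ⟨Ioc_subset_Ioc_right hX hnX, hnQ⟩, hn⟩)

lemma cyclicCount_le_card_sifted_add (Q : Finset ℕ) (hX : X ≤ N) :
    cyclicCount X ≤ #(sifted Q X) + ∑ q ∈ Q, #{n ∈ Ioc 0 N | IsCyclicNum n ∧ q ∣ n} := by
  rw [cyclicCount_natCast]
  refine (card_le_card fun n hn ↦ ?_).trans
    ((card_union_le _ _).trans (Nat.add_le_add_left card_biUnion_le _))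
  obtain ⟨hnX, hn⟩ := mem_filter.1 hn
  by_cases hnQ : ∀ q ∈ Q, ¬ q ∣ n
  · exact mem_union_left _ (mem_sifted.2 ⟨hnX, hnQ⟩)
  · push Not at hnQ
    obtain ⟨q, hq, hqn⟩ := hnQ
    exact mem_union_right _
      (mem_biUnion.2 ⟨q, hq, mem_filter.2 ⟨Ioc_subset_Ioc_right hX hnX, hn, hqn⟩⟩)

theorem mul_mertensProduct_sub_le_cyclicCount {J Y : ℕ} (hX : X ≤ N) (hJ : N ≤ 2 ^ J)
    (hY : 2 ≤ Y) :
    X * mertensProduct Y - (2 ^ Y + N * (1 + 9 * (1 + log J)) * ((log Y + 2) / Y))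
      ≤ cyclicCount X := by
  have hsifted := (abs_le.1 (abs_card_sifted_primesLE_sub_le Y X)).1
  have hnoncyclic := card_not_isCyclicNum_sifted_le hY hJ
  have hcount : (#(sifted (Nat.primesLE Y) X) : ℝ) ≤
      cyclicCount X + #{n ∈ sifted (Nat.primesLE Y) N | ¬ IsCyclicNum n} := by
    exact_mod_cast card_sifted_le_cyclicCount_add _ hX
  linarith

theorem cyclicCount_le_mul_mertensProduct_add {z Y : ℕ} {T : ℝ} (hX : X ≤ N) (hT : 0 < T)
    (hz : ∀ p ∈ Nat.primesLE Y, z ≤ N / p)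
    (hTz : ∀ p ∈ Nat.primesLE Y, T ≤ p * ∑ q ∈ primesOneMod p z, (q : ℝ)⁻¹) :
    cyclicCount X ≤ X * mertensProduct Y + (2 ^ Y + Y * (3 * N / T)) := by
  have hsifted := (abs_le.1 (abs_card_sifted_primesLE_sub_le Y X)).2
  have hdvd : ∀ p ∈ Nat.primesLE Y,
      (#{n ∈ Ioc 0 N | IsCyclicNum n ∧ p ∣ n} : ℝ) ≤ 3 * N / T := fun p hp ↦ by
    have hprime := Nat.prime_of_mem_primesLE hp
    have hp0 : (0 : ℝ) < p := by exact_mod_cast hprime.pos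
    have hbound := card_isCyclicNum_dvd_mul_sum_le hprime (hz p hp)
    rw [le_div_iff₀ hp0, mul_right_comm, mul_assoc] at hbound
    rw [le_div_iff₀ hT]
    exact (mul_le_mul_of_nonneg_left (hTz p hp) (Nat.cast_nonneg _)).trans hbound
  have hcount : (cyclicCount X : ℝ) ≤ #(sifted (Nat.primesLE Y) X) +
      ∑ p ∈ Nat.primesLE Y, (#{n ∈ Ioc 0 N | IsCyclicNum n ∧ p ∣ n} : ℝ) := by
    exact_mod_cast cyclicCount_le_card_sifted_add _ hX
  have hsum := sum_le_card_nsmul _ _ _ hdvd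
  rw [nsmul_eq_mul] at hsum
  have : #(Nat.primesLE Y) * (3 * N / T) ≤ Y * (3 * N / T) := by
    gcongr
    exact card_primesLE_le Y
  linarith

end CyclicCountBounds

section IteratedLogarithm

variable {N : ℕ}

lemma exp_log_log_natCast (hN : 0 < log (log N)) : exp (log (log N)) = log N :=
  exp_log <| (log_natCast_nonneg N).lt_of_ne fun h ↦ by simp [← h] at hN

lemma exp_exp_log_log_natCast (hN : 0 < log (log N)) : exp (exp (log (log N))) = N := by
  rw [exp_log_log_natCast hN, exp_log]
  exact_mod_cast Nat.pos_of_ne_zero fun h ↦ by simp [h] at hN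

lemma exists_le_two_pow_log_le (hN : 1 ≤ log (log N)) :
    ∃ J : ℕ, N ≤ 2 ^ J ∧ log J ≤ log (log N) + 2 := by
  have hN0 := one_pos.trans_le hN
  have hexp := add_one_le_exp (log (log N))
  set J := ⌈2 * exp (log (log N))⌉₊
  have hle : 2 * exp (log (log N)) ≤ J := Nat.le_ceil _
  have hge : J ≤ 2 * exp (log (log N)) + 1 := (Nat.ceil_lt_add_one (by positivity)).le
  refine ⟨J, ?_, ?_⟩
  · have hpow : (N : ℝ) ≤ 2 ^ J := by
      rw [← exp_exp_log_log_natCast hN0, ← exp_log (two_pos (α := ℝ)), ← exp_nat_mul]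
      gcongr
      nlinarith [log_two_gt_d9]
    exact_mod_cast hpow
  · rw [log_le_iff_le_exp (by linarith), exp_add]
    nlinarith [add_one_le_exp (2 : ℝ)]

lemma le_sqrt_pow_four (hN : 4 ≤ N) : N ≤ N.sqrt ^ 4 := by
  have htwo : 2 ≤ N.sqrt := Nat.le_sqrt.2 hN
  calc
    N ≤ (N.sqrt + 1) ^ 2 := (Nat.lt_succ_sqrt' N).le
    _ ≤ (N.sqrt ^ 2) ^ 2 := Nat.pow_le_pow_left (by nlinarith) 2
    _ = N.sqrt ^ 4 := by rw [← pow_mul]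

lemma exp_log_log_sub_two_le_log_sqrt (hN : 2 ≤ log (log N)) :
    exp (log (log N) - 2) ≤ log N.sqrt := by
  have hN0 := two_pos.trans_le hN
  have hN4 : 4 ≤ N := by
    have : (4 : ℝ) ≤ N := by
      rw [← exp_exp_log_log_natCast hN0]
      linarith [add_one_le_exp (log (log N)), add_one_le_exp (exp (log (log N)))]
    exact_mod_cast this
  have hfour : 4 ≤ exp 2 := by
    rw [show (2 : ℝ) = 1 + 1 by norm_num, exp_add]
    nlinarith [add_one_le_exp (1 : ℝ)]
  have hlog : log N ≤ 4 * log N.sqrt := by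
    rw [show (4 : ℝ) = (4 : ℕ) by norm_num, ← log_pow]
    exact log_le_log (by positivity) (by exact_mod_cast le_sqrt_pow_four hN4)
  rw [exp_sub, exp_log_log_natCast hN0, div_le_iff₀ (exp_pos 2)]
  nlinarith [log_natCast_nonneg N.sqrt]

lemma log_log_sub_two_le_log_log_sqrt (hN : 2 ≤ log (log N)) :
    log (log N) - 2 ≤ log (log N.sqrt) := by
  have h := exp_log_log_sub_two_le_log_sqrt hN
  rwa [le_log_iff_exp_le ((exp_pos _).trans_le h)]

lemma exp_log_log_div_four_le_sqrt_log_sqrt (hN : 4 ≤ log (log N)) :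
    exp (log (log N) / 4) ≤ √(log N.sqrt) := by
  refine le_sqrt_of_sq_le (le_trans ?_ (exp_log_log_sub_two_le_log_sqrt (by linarith)))
  rw [← exp_nat_mul]
  gcongr
  push_cast
  linarith

lemma log_log_le_sqrt (hN : 2 ≤ log (log N)) : log (log N) ≤ N.sqrt := by
  have hpos := (exp_pos _).trans_le (exp_log_log_sub_two_le_log_sqrt hN)
  have hsqrt : (0 : ℝ) < N.sqrt := by
    exact_mod_cast Nat.pos_of_ne_zero fun h ↦ by simp [h] at hpos
  linarith [add_one_le_exp (log (log N) - 2), exp_log_log_sub_two_le_log_sqrt hN,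
    log_le_sub_one_of_pos hsqrt]

variable {p : ℕ}

lemma le_three_halves_mul_mul_log (hp : 2 ≤ p) : (p : ℝ) ≤ 3 / 2 * (p * log p) := by
  have hp2 : (2 : ℝ) ≤ p := by exact_mod_cast hp
  nlinarith [log_two_gt_d9, log_le_log two_pos hp2]

lemma sqrt_le_div_of_mul_log_le (hp : 2 ≤ p) (hN : 2 ≤ log (log N))
    (hpN : 160 * (p * log p) ≤ log (log N)) : N.sqrt ≤ N / p := by
  have hle : (p : ℝ) ≤ N.sqrt := by
    linarith [le_three_halves_mul_mul_log hp, log_log_le_sqrt hN]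
  rw [Nat.le_div_iff_mul_le (by positivity)]
  exact (Nat.mul_le_mul_left _ (by exact_mod_cast hle)).trans (Nat.sqrt_le N)

theorem log_log_div_four_le_mul_sum_primesOneMod (hp : 2 ≤ p) (hN : 20 ≤ log (log N))
    (hpN : 160 * (p * log p) ≤ log (log N)) :
    log (log N) / 4 ≤ p * ∑ q ∈ primesOneMod p N.sqrt, (q : ℝ)⁻¹ := by
  have hpow : (p : ℝ) ^ (9 * p) ≤ √(log N.sqrt) := by
    refine le_trans ?_ (exp_log_log_div_four_le_sqrt_log_sqrt (by linarith))
    rw [← exp_log (show (0 : ℝ) < p by positivity), ← exp_nat_mul]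
    gcongr
    push_cast
    linarith
  have hdirichlet := log_log_div_two_sub_le_sum_primesOneMod hp hpow
  linarith [le_three_halves_mul_mul_log hp, log_log_sub_two_le_log_log_sqrt (N := N) (by linarith)]

end IteratedLogarithm

section SiftingLevels

/-- If `v` is the binary order of magnitude of `log (log N)`, the numbers up to `N` are sifted by
the primes up to `2 ^ (v ± levelGap v)`. The gap is large enough for `2 ^ levelGap v` to beat any
error factor `v ^ 11`, and small enough for the two Mertens products to be asymptotically equal. -/
def levelGap (v : ℕ) : ℕ := 12 * Nat.log 2 v

variable {v : ℕ}

lemma pow_le_two_pow_levelGap (v : ℕ) : (v : ℝ) ^ 12 ≤ 4096 * 2 ^ levelGap v := by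
  have hv : (v : ℝ) ≤ 2 ^ (Nat.log 2 v + 1) := by
    exact_mod_cast (Nat.lt_pow_succ_log_self one_lt_two v).le
  calc
    (v : ℝ) ^ 12 ≤ (2 ^ (Nat.log 2 v + 1)) ^ 12 := by gcongr
    _ = 4096 * 2 ^ levelGap v := by rw [levelGap, ← pow_mul]; ring

lemma inv_two_pow_levelGap_le (hv : 0 < v) : ((2 : ℝ) ^ levelGap v)⁻¹ ≤ 4096 / v ^ 12 := by
  rw [inv_eq_one_div, div_le_div_iff₀ (by positivity) (by positivity), one_mul]
  exact pow_le_two_pow_levelGap v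

lemma two_pow_sub_levelGap_le (hv : 0 < v) (hgap : levelGap v ≤ v) :
    (2 : ℝ) ^ (v - levelGap v) ≤ 2 ^ v * (4096 / v ^ 12) := by
  rw [pow_sub₀ 2 two_ne_zero hgap]
  gcongr
  exact inv_two_pow_levelGap_le hv

lemma tendsto_natLog_atTop {b : ℕ} (hb : 1 < b) : Tendsto (Nat.log b) atTop atTop :=
  tendsto_atTop.2 fun n ↦ (eventually_ge_atTop (b ^ n)).mono fun _ ↦ Nat.le_log_of_pow_le hb

lemma eventually_levelGap_le_mul {ε : ℝ} (hε : 0 < ε) :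
    ∀ᶠ v in atTop, (levelGap v : ℝ) ≤ ε * v := by
  have hlim := tendsto_pow_const_div_const_pow_of_one_lt 1 (one_lt_two (α := ℝ))
  filter_upwards [(tendsto_natLog_atTop one_lt_two).eventually
    (hlim.eventually_le_const (show 0 < ε / 12 by positivity)), eventually_gt_atTop 0] with v hv hv0
  rw [pow_one, div_le_iff₀ (by positivity)] at hv
  have hpow : (2 : ℝ) ^ Nat.log 2 v ≤ v := by exact_mod_cast Nat.pow_log_le_self 2 hv0.ne'
  rw [levelGap]
  push_cast
  nlinarith

lemma eventually_levelGap_le : ∀ᶠ v in atTop, levelGap v ≤ v :=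
  (eventually_levelGap_le_mul one_pos).mono fun v hv ↦ by exact_mod_cast hv.trans_eq (one_mul _)

theorem eventually_mertensProduct_sub_levelGap_le {ε : ℝ} (hε : 0 < ε) :
    ∀ᶠ v in atTop, mertensProduct (2 ^ (v - levelGap v)) ≤
      (1 + ε) * mertensProduct (2 ^ (v + levelGap v)) := by
  filter_upwards [eventually_levelGap_le_mul (show 0 < ε / (16 * (1 + ε)) by positivity),
    eventually_levelGap_le_mul (show (0 : ℝ) < 1 / 2 by norm_num), eventually_gt_atTop 0]
    with v hgap hhalf hv
  have hv0 : (0 : ℝ) < v := by exact_mod_cast hv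
  have hlt : levelGap v < v := by
    have : (levelGap v : ℝ) < v := by linarith
    exact_mod_cast this
  have hcompare := mertensProduct_two_pow_mul_le (Nat.sub_pos_of_lt hlt)
    ((Nat.sub_le v _).trans (Nat.le_add_right v (levelGap v)))
  have hratio : 4 * (((v + levelGap v : ℕ) : ℝ) - (v - levelGap v : ℕ)) / (v - levelGap v : ℕ) ≤
      ε / (1 + ε) := by
    rw [Nat.cast_sub hlt.le, Nat.cast_add, div_le_iff₀ (by linarith)]
    calc
      4 * ((v + levelGap v : ℝ) - (v - levelGap v)) = 8 * levelGap v := by ring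
      _ ≤ 8 * (ε / (16 * (1 + ε)) * v) := by gcongr
      _ = ε / (1 + ε) * (v - 1 / 2 * v) := by field_simp; ring
      _ ≤ ε / (1 + ε) * (v - levelGap v) := by gcongr
  have hone : (1 + ε) * (1 - ε / (1 + ε)) = 1 := by field_simp; ring
  calc
    _ = (1 + ε) * (mertensProduct (2 ^ (v - levelGap v)) * (1 - ε / (1 + ε))) := by
      rw [mul_left_comm, hone, mul_one]
    _ ≤ _ := by
      gcongr
      refine le_trans ?_ hcompare
      have := (mertensProduct_pos (2 ^ (v - levelGap v))).le
      gcongr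

theorem eventually_div_pow_le_mul_mertensProduct (C : ℝ) {ε : ℝ} (hε : 0 < ε) :
    ∀ᶠ v : ℕ in atTop, C / v ^ 11 ≤ ε * mertensProduct (2 ^ (v + levelGap v)) := by
  have hlim : Tendsto (fun v : ℕ ↦ ε * exp (-9) / 256 * (v : ℝ) ^ 3) atTop atTop :=
    ((tendsto_pow_atTop three_ne_zero).comp tendsto_natCast_atTop_atTop).const_mul_atTop
      (by positivity)
  filter_upwards [hlim.eventually_ge_atTop C, eventually_levelGap_le, eventually_gt_atTop 0]
    with v hC hgap hv
  have hlevel : ((v + levelGap v : ℕ) : ℝ) ≤ 2 * v := by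
    exact_mod_cast (show v + levelGap v ≤ 2 * v by linarith)
  have hmertens := exp_neg_div_pow_le_mertensProduct (b := v + levelGap v) (by positivity)
  calc
    C / v ^ 11 ≤ ε * exp (-9) / 256 * v ^ 3 / v ^ 11 := by gcongr
    _ = ε * (exp (-9) / (2 * v) ^ 8) := by field_simp; ring
    _ ≤ ε * (exp (-9) / (v + levelGap v : ℕ) ^ 8) := by gcongr
    _ ≤ ε * mertensProduct (2 ^ (v + levelGap v)) := by gcongr

end SiftingLevels

section ErrorTerms

variable {N v : ℕ}

lemma sq_add_mul_le_exp {y : ℝ} (hy : 20 ≤ y) : y ^ 2 + 12 * y ≤ exp y := by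
  have hcube := pow_div_factorial_le_exp y (by linarith) 3
  rw [show (Nat.factorial 3 : ℝ) = 6 by norm_num [Nat.factorial]] at hcube
  nlinarith [mul_nonneg (show 0 ≤ y by linarith)
    (mul_nonneg (show 0 ≤ y - 20 by linarith) (show 0 ≤ y + 14 by linarith))]

lemma two_pow_two_pow_le {b : ℕ} (hN : 20 ≤ log (log N)) (hv : 0 < v)
    (hvN : 2 ^ v ≤ log (log N)) (hb : b ≤ 2 * v) : (2 : ℝ) ^ (2 ^ b) ≤ N / v ^ 12 := by
  set y := log (log N)
  have hlevel : (2 : ℝ) ^ b ≤ y ^ 2 := calc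
    (2 : ℝ) ^ b ≤ (2 ^ v) ^ 2 := by
      rw [← pow_mul, mul_comm]
      exact pow_le_pow_right₀ one_le_two hb
    _ ≤ y ^ 2 := by gcongr
  have hvy : (v : ℝ) ≤ exp y := by
    have : (v : ℝ) < 2 ^ v := by exact_mod_cast Nat.lt_two_pow_self
    linarith [add_one_le_exp y]
  rw [le_div_iff₀ (by positivity)]
  calc
    (2 : ℝ) ^ (2 ^ b) * v ^ 12 ≤ exp 1 ^ (2 ^ b) * exp y ^ 12 := by
      gcongr
      linarith [add_one_le_exp (1 : ℝ)]
    _ = exp (2 ^ b + 12 * y) := by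
      rw [← exp_nat_mul, ← exp_nat_mul, ← exp_add]
      push_cast
      ring_nf
    _ ≤ exp (exp y) := by
      gcongr
      linarith [sq_add_mul_le_exp hN]
    _ = N := exp_exp_log_log_natCast (by linarith)

lemma div_pow_twelve_le (hv : 0 < v) : (N : ℝ) / v ^ 12 ≤ N * (1 / v ^ 11) := by
  have : (1 : ℝ) ≤ v := by exact_mod_cast hv
  rw [mul_one_div]
  gcongr
  norm_num

lemma noncyclic_error_le {J : ℕ} (hv : 2 ≤ v) (hNv : log (log N) ≤ 2 ^ (v + 1))
    (hgap : levelGap v ≤ v) (hJ : log J ≤ log (log N) + 2) :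
    N * (1 + 9 * (1 + log J)) *
      ((log (2 ^ (v + levelGap v) : ℕ) + 2) / (2 ^ (v + levelGap v) : ℕ)) ≤
      N * (901120 / (v : ℝ) ^ 11) := by
  have hv2 : (2 : ℝ) ≤ v := by exact_mod_cast hv
  have hlevel : ((v + levelGap v : ℕ) : ℝ) ≤ 2 * v := by
    exact_mod_cast (show v + levelGap v ≤ 2 * v by linarith)
  have hlogJ : 1 + 9 * (1 + log J) ≤ 55 * 2 ^ v := by
    rw [pow_succ] at hNv
    linarith [one_le_pow₀ (n := v) (one_le_two (α := ℝ))]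
  have hlog : log (2 ^ (v + levelGap v) : ℕ) + 2 ≤ 4 * v := by
    rw [Nat.cast_pow, Nat.cast_ofNat, log_pow]
    nlinarith [log_two_lt_d9, log_two_gt_d9]
  calc
    _ ≤ N * (55 * (2 : ℝ) ^ v) * (4 * v / (2 ^ (v + levelGap v) : ℕ)) := by
      have : 0 ≤ log (2 ^ (v + levelGap v) : ℕ) + 2 :=
        add_nonneg (log_natCast_nonneg _) zero_le_two
      gcongr
    _ = N * (220 * v * ((2 : ℝ) ^ levelGap v)⁻¹) := by
      rw [pow_add]
      push_cast
      field_simp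
      ring
    _ ≤ N * (220 * v * (4096 / v ^ 12)) := by
      gcongr
      exact inv_two_pow_levelGap_le (by linarith)
    _ = N * (901120 / v ^ 11) := by
      field_simp
      ring

lemma sieve_add_noncyclic_error_le {J : ℕ} (hN : 20 ≤ log (log N)) (hv : 2 ≤ v)
    (hvN : 2 ^ v ≤ log (log N)) (hNv : log (log N) ≤ 2 ^ (v + 1)) (hgap : levelGap v ≤ v)
    (hJ : log J ≤ log (log N) + 2) :
    2 ^ (2 ^ (v + levelGap v)) + N * (1 + 9 * (1 + log J)) *
      ((log (2 ^ (v + levelGap v) : ℕ) + 2) / (2 ^ (v + levelGap v) : ℕ)) ≤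
      N * (10 ^ 6 / (v : ℝ) ^ 11) := by
  calc
    _ ≤ N * (1 / (v : ℝ) ^ 11) + N * (901120 / (v : ℝ) ^ 11) := add_le_add
      ((two_pow_two_pow_le hN (by linarith) hvN (by linarith)).trans
        (div_pow_twelve_le (by linarith))) (noncyclic_error_le hv hNv hgap hJ)
    _ = N * (901121 / (v : ℝ) ^ 11) := by ring
    _ ≤ N * (10 ^ 6 / (v : ℝ) ^ 11) := by
      gcongr
      norm_num

lemma sieve_add_dvd_error_le (hN : 20 ≤ log (log N)) (hv : 0 < v) (hvN : 2 ^ v ≤ log (log N))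
    (hgap : levelGap v ≤ v) :
    2 ^ (2 ^ (v - levelGap v)) + (2 ^ (v - levelGap v) : ℕ) * (3 * N / (log (log N) / 4)) ≤
      N * (10 ^ 6 / v ^ 11) := by
  have hdvd : (2 ^ (v - levelGap v) : ℕ) * (3 * N / (log (log N) / 4)) ≤
      N * (49152 / (v : ℝ) ^ 12) := calc
    _ ≤ (2 : ℝ) ^ v * (4096 / v ^ 12) * (3 * N / (2 ^ v / 4)) := by
      push_cast
      gcongr
      exact two_pow_sub_levelGap_le hv hgap
    _ = N * (49152 / (v : ℝ) ^ 12) := by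
      field_simp
      ring
  calc
    _ ≤ N / v ^ 12 + N * (49152 / (v : ℝ) ^ 12) :=
      add_le_add (two_pow_two_pow_le hN hv hvN (by omega)) hdvd
    _ = 49153 * (N / v ^ 12) := by ring
    _ ≤ 49153 * (N * (1 / v ^ 11)) := by
      gcongr
      exact div_pow_twelve_le hv
    _ = N * (49153 / v ^ 11) := by ring
    _ ≤ N * (10 ^ 6 / v ^ 11) := by
      gcongr
      norm_num

end ErrorTerms

section UniformAsymptotics

variable {X N v : ℕ}

lemma mul_log_le_two_pow {p : ℕ} (hv : 4 ≤ v) (hgap : levelGap v ≤ v) (hp0 : 0 < p)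
    (hp : p ≤ 2 ^ (v - levelGap v)) : 160 * (p * log p) ≤ 2 ^ v := by
  have hv4 : (4 : ℝ) ≤ v := by exact_mod_cast hv
  have hpR : (p : ℝ) ≤ 2 ^ (v - levelGap v) := by exact_mod_cast hp
  have hlog : log p ≤ v := by
    have hle : log p ≤ log ((2 : ℝ) ^ v) := log_le_log (by positivity)
      (hpR.trans (pow_le_pow_right₀ one_le_two (Nat.sub_le v _)))
    rw [log_pow] at hle
    nlinarith [log_two_lt_d9]
  calc
    160 * (p * log p) ≤ 160 * ((2 ^ v * (4096 / v ^ 12)) * v) := by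
      gcongr
      exact hpR.trans (two_pow_sub_levelGap_le (by linarith) hgap)
    _ = 2 ^ v * (655360 / v ^ 11) := by
      field_simp
      ring
    _ ≤ 2 ^ v * (655360 / 4 ^ 11) := by gcongr
    _ ≤ 2 ^ v := mul_le_of_le_one_right (by positivity) (by norm_num)

theorem cyclicCount_le_of_two_pow_le (hN : 20 ≤ log (log N)) (hv : 4 ≤ v)
    (hvN : 2 ^ v ≤ log (log N)) (hgap : levelGap v ≤ v) (hX : X ≤ N) :
    cyclicCount X ≤ X * mertensProduct (2 ^ (v - levelGap v)) + N * (10 ^ 6 / (v : ℝ) ^ 11) := by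
  have hsmall : ∀ p ∈ Nat.primesLE (2 ^ (v - levelGap v)), 160 * (p * log p) ≤ log (log N) :=
    fun p hp ↦ (mul_log_le_two_pow hv hgap (Nat.prime_of_mem_primesLE hp).pos
      (Nat.le_of_mem_primesLE hp)).trans hvN
  refine (cyclicCount_le_mul_mertensProduct_add (z := N.sqrt) (T := log (log N) / 4) hX
    (by linarith) (fun p hp ↦ ?_) fun p hp ↦ ?_).trans
    (add_le_add_right (sieve_add_dvd_error_le hN (by linarith) hvN hgap) _)
  · exact sqrt_le_div_of_mul_log_le (Nat.two_le_of_mem_primesLE hp) (by linarith) (hsmall p hp)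
  · exact log_log_div_four_le_mul_sum_primesOneMod (Nat.two_le_of_mem_primesLE hp) hN (hsmall p hp)

theorem le_cyclicCount_of_two_pow_le (hN : 20 ≤ log (log N)) (hv : 2 ≤ v)
    (hvN : 2 ^ v ≤ log (log N)) (hNv : log (log N) ≤ 2 ^ (v + 1)) (hgap : levelGap v ≤ v)
    (hX : X ≤ N) :
    X * mertensProduct (2 ^ (v + levelGap v)) - N * (10 ^ 6 / (v : ℝ) ^ 11) ≤ cyclicCount X := by
  obtain ⟨J, hNJ, hJ⟩ := exists_le_two_pow_log_le (N := N) (by linarith)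
  have hlevel : 2 ≤ 2 ^ (v + levelGap v) := Nat.le_self_pow (by omega) 2
  exact (sub_le_sub_left (sieve_add_noncyclic_error_le hN hv hvN hNv hgap hJ) _).trans
    (mul_mertensProduct_sub_le_cyclicCount hX hNJ hlevel)

lemma two_pow_natLog_floor_le {y : ℝ} (hy : 1 ≤ y) : (2 : ℝ) ^ Nat.log 2 ⌊y⌋₊ ≤ y :=
  calc
    (2 : ℝ) ^ Nat.log 2 ⌊y⌋₊ ≤ ⌊y⌋₊ := by
      exact_mod_cast Nat.pow_log_le_self 2 (Nat.floor_pos.2 hy).ne'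
    _ ≤ y := Nat.floor_le (by linarith)

lemma le_two_pow_natLog_floor_add_one (y : ℝ) : y ≤ (2 : ℝ) ^ (Nat.log 2 ⌊y⌋₊ + 1) :=
  calc
    y ≤ ⌊y⌋₊ + 1 := (Nat.lt_floor_add_one y).le
    _ ≤ (2 : ℝ) ^ (Nat.log 2 ⌊y⌋₊ + 1) := by
      exact_mod_cast Nat.lt_pow_succ_log_self one_lt_two ⌊y⌋₊

theorem eventually_abs_cyclicCount_sub_le {ε : ℝ} (hε : 0 < ε) :
    ∀ᶠ N : ℕ in atTop, ∃ G : ℝ, 0 < G ∧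
      ∀ X ≤ N, |(cyclicCount X : ℝ) - X * G| ≤ ε * (N * G) := by
  have hloglog : Tendsto (fun N : ℕ ↦ log (log N)) atTop atTop :=
    tendsto_log_atTop.comp (tendsto_log_atTop.comp tendsto_natCast_atTop_atTop)
  have horder : Tendsto (fun N : ℕ ↦ Nat.log 2 ⌊log (log N)⌋₊) atTop atTop :=
    (tendsto_natLog_atTop one_lt_two).comp (tendsto_nat_floor_atTop.comp hloglog)
  filter_upwards [hloglog.eventually_ge_atTop 20, horder.eventually_ge_atTop 4,
    horder.eventually eventually_levelGap_le,
    horder.eventually (eventually_mertensProduct_sub_levelGap_le (half_pos hε)),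
    horder.eventually (eventually_div_pow_le_mul_mertensProduct (10 ^ 6) (half_pos hε))]
    with N hN hv hgap hratio herror
  have hvN := two_pow_natLog_floor_le (y := log (log N)) (by linarith)
  have hNv := le_two_pow_natLog_floor_add_one (log (log N))
  set v := Nat.log 2 ⌊log (log N)⌋₊
  set G := mertensProduct (2 ^ (v + levelGap v))
  have hG : 0 < G := mertensProduct_pos _
  refine ⟨G, hG, fun X hX ↦ ?_⟩
  have hlower := le_cyclicCount_of_two_pow_le hN (by linarith) hvN hNv hgap hX
  have hupper := cyclicCount_le_of_two_pow_le hN hv hvN hgap hX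
  have hXN : (X : ℝ) * (ε / 2 * G) ≤ N * (ε / 2 * G) := by gcongr
  have hXratio := mul_le_mul_of_nonneg_left hratio (Nat.cast_nonneg (α := ℝ) X)
  have hNerror := mul_le_mul_of_nonneg_left herror (Nat.cast_nonneg (α := ℝ) N)
  have : 0 ≤ ε * (N * G) := by positivity
  rw [abs_le]
  constructor <;> linarith

end UniformAsymptotics

section PowerSums

open Finset

lemma abs_sum_Icc_pow_sub_le (k n : ℕ) :
    |∑ i ∈ Icc 1 n, (i : ℝ) ^ k - n * (n : ℝ) ^ k / (k + 1)| ≤ (n : ℝ) ^ k := by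
  have hmono : MonotoneOn (fun x : ℝ ↦ x ^ k) (Set.Icc ((0 : ℕ) : ℝ) n) := fun x hx y _ hxy ↦
    pow_le_pow_left₀ (by exact_mod_cast hx.1) hxy k
  have hlower := hmono.integral_le_sum_Ico n.zero_le
  have hupper := hmono.sum_le_integral_Ico n.zero_le
  rw [integral_pow, Nat.cast_zero, zero_pow k.succ_ne_zero, sub_zero, pow_succ'] at hlower hupper
  have hshift : ∑ i ∈ Ico 0 n, ((i + 1 : ℕ) : ℝ) ^ k = ∑ i ∈ Icc 1 n, (i : ℝ) ^ k := by
    rw [sum_Ico_add' (fun i : ℕ ↦ (i : ℝ) ^ k) 0 n 1]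
    rfl
  have hsplit : ∑ i ∈ Icc 1 n, (i : ℝ) ^ k ≤ ∑ i ∈ Ico 0 n, (i : ℝ) ^ k + (n : ℝ) ^ k := by
    rw [← sum_Ico_succ_top n.zero_le]
    exact sum_le_sum_of_subset_of_nonneg (fun i ↦ by simp) fun i _ _ ↦ by positivity
  rw [hshift] at hlower
  rw [abs_le]
  constructor <;> linarith [pow_nonneg (Nat.cast_nonneg (α := ℝ) n) k]

lemma abs_sum_Icc_div_mul_pow_sub_le (k n : ℕ) {a : ℝ} (ha : 0 ≤ a) :
    |∑ i ∈ Icc 1 n, (i / n * a) ^ k - n * a ^ k / (k + 1)| ≤ a ^ k := by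
  obtain rfl | hn := n.eq_zero_or_pos
  · simp [ha]
  have hn0 : (n : ℝ) ≠ 0 := by positivity
  calc
    _ = |(∑ i ∈ Icc 1 n, (i : ℝ) ^ k - n * (n : ℝ) ^ k / (k + 1)) * (a / n) ^ k| := by
      rw [sub_mul, sum_mul]
      congr 2
      · exact sum_congr rfl fun i _ ↦ by rw [← mul_pow]; ring
      · rw [div_pow]
        field_simp
    _ ≤ (n : ℝ) ^ k * (a / n) ^ k := by
      rw [abs_mul, abs_of_nonneg (a := (a / n) ^ k) (by positivity)]
      gcongr
      exact abs_sum_Icc_pow_sub_le k n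
    _ = a ^ k := by rw [← mul_pow, mul_div_cancel₀ a hn0]

/-- The terms `c 1, …, c n` are, uniformly as `n → ∞`, spread out like the multiples of `c n / n`:
a uniform form of regular variation of index one, which is satisfied by `n * log n`. -/
def IsAsymptoticallyProportional (c : ℕ → ℝ) : Prop :=
  ∀ ε > 0, ∀ᶠ n in atTop, ∀ i ∈ Icc 1 n, |c i - i / n * c n| ≤ ε * c n

variable {c : ℕ → ℝ} {n : ℕ}

lemma abs_pow_sub_pow_le_of_abs_sub_le {x y a ε : ℝ} (k : ℕ) (hy : |y| ≤ a) (hε : ε ≤ 1)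
    (hxy : |x - y| ≤ ε * a) : |x ^ k - y ^ k| ≤ ε * (k * 2 ^ (k - 1)) * a ^ k := by
  have ha : 0 ≤ a := (abs_nonneg y).trans hy
  have hεa : 0 ≤ ε * a := (abs_nonneg _).trans hxy
  have hx : |x| ≤ 2 * a := by linarith [abs_sub_abs_le_abs_sub x y, mul_le_of_le_one_left ha hε]
  have hmax : max |x| |y| ≤ 2 * a := max_le hx (by linarith)
  calc
    |x ^ k - y ^ k| ≤ |x - y| * k * max |x| |y| ^ (k - 1) := abs_pow_sub_pow_le x y k
    _ ≤ ε * a * k * (2 * a) ^ (k - 1) := by gcongr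
    _ = ε * (k * 2 ^ (k - 1)) * a ^ k := by
      obtain _ | k := k
      · simp
      · rw [Nat.add_sub_cancel]
        ring

lemma abs_sum_pow_sub_le {ε : ℝ} (k : ℕ) (hε : ε ≤ 1) (hcn : 0 ≤ c n)
    (hc : ∀ i ∈ Icc 1 n, |c i - i / n * c n| ≤ ε * c n) :
    |∑ i ∈ Icc 1 n, c i ^ k - n * c n ^ k / (k + 1)| ≤
      (n * (ε * (k * 2 ^ (k - 1))) + 1) * c n ^ k := by
  have hterm : ∀ i ∈ Icc 1 n, |c i ^ k - (i / n * c n) ^ k| ≤ ε * (k * 2 ^ (k - 1)) * c n ^ k :=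
    fun i hi ↦ by
      have hin : (i / n : ℝ) ≤ 1 :=
        div_le_one_of_le₀ (by exact_mod_cast (mem_Icc.1 hi).2) (by positivity)
      refine abs_pow_sub_pow_le_of_abs_sub_le k ?_ hε (hc i hi)
      rw [abs_of_nonneg (by positivity)]
      exact mul_le_of_le_one_left hcn hin
  have hsum : |∑ i ∈ Icc 1 n, c i ^ k - ∑ i ∈ Icc 1 n, (i / n * c n) ^ k| ≤
      n * (ε * (k * 2 ^ (k - 1)) * c n ^ k) := by
    rw [← sum_sub_distrib]
    refine (abs_sum_le_sum_abs _ _).trans ((sum_le_card_nsmul _ _ _ hterm).trans_eq ?_)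
    rw [Nat.card_Icc, nsmul_eq_mul, Nat.add_sub_cancel]
  linarith [abs_sub_le (∑ i ∈ Icc 1 n, c i ^ k) (∑ i ∈ Icc 1 n, (i / n * c n) ^ k)
    (n * c n ^ k / (k + 1)), abs_sum_Icc_div_mul_pow_sub_le k n hcn]

theorem IsAsymptoticallyProportional.sum_pow_isEquivalent (hc : IsAsymptoticallyProportional c)
    (k : ℕ) : (fun n ↦ ∑ i ∈ Icc 1 n, c i ^ k) ~[atTop] fun n ↦ n * c n ^ k / (k + 1) := by
  refine isLittleO_iff.2 fun η hη ↦ ?_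
  set ε := min 1 (η / (2 * (k + 1) * (k * 2 ^ (k - 1) + 1)))
  have hε : 0 < ε := by positivity
  have hεη : ε * (k * 2 ^ (k - 1)) ≤ η / (2 * (k + 1)) := calc
    ε * (k * 2 ^ (k - 1)) ≤ η / (2 * (k + 1) * (k * 2 ^ (k - 1) + 1)) * (k * 2 ^ (k - 1) + 1) := by
      gcongr
      · exact min_le_right _ _
      · linarith
    _ = η / (2 * (k + 1)) := by field_simp
  have hlarge : Tendsto (fun n : ℕ ↦ (n : ℝ) * (η / (2 * (k + 1)))) atTop atTop :=
    tendsto_natCast_atTop_atTop.atTop_mul_const (by positivity)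
  filter_upwards [hc ε hε, hlarge.eventually_ge_atTop 1, eventually_gt_atTop 0] with n hcn hn hn0
  have hcn0 : 0 ≤ c n :=
    nonneg_of_mul_nonneg_right ((abs_nonneg _).trans (hcn n (mem_Icc.2 ⟨hn0, le_rfl⟩))) hε
  have hbound := abs_sum_pow_sub_le k (min_le_left _ _) hcn0 hcn
  rw [Pi.sub_apply, norm_eq_abs, norm_of_nonneg (by positivity)]
  calc
    _ ≤ (n * (ε * (k * 2 ^ (k - 1))) + 1) * c n ^ k := hbound
    _ ≤ (n * (η / (2 * (k + 1))) + n * (η / (2 * (k + 1)))) * c n ^ k := by gcongr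
    _ = η * (n * c n ^ k / (k + 1)) := by
      field_simp
      ring

end PowerSums

section CyclicNum

lemma infinite_isCyclicNum : (Set.ofPred IsCyclicNum).Infinite :=
  Nat.infinite_setOfPred_prime.mono fun _ ↦ IsCyclicNum.of_prime

lemma cyclicNum_mono : Monotone cyclicNum := fun _ _ h ↦
  (Nat.nth_strictMono infinite_isCyclicNum).monotone (Nat.sub_le_sub_right h 1)

lemma tendsto_cyclicNum_atTop : Tendsto cyclicNum atTop atTop :=
  (Nat.nth_strictMono infinite_isCyclicNum).tendsto_atTop.comp (tendsto_sub_atTop_nat 1)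

lemma cyclicCount_cyclicNum {n : ℕ} (hn : 0 < n) : cyclicCount (cyclicNum n) = n := by
  have hcount := Nat.count_nth_succ_of_infinite infinite_isCyclicNum (n - 1)
  rwa [Nat.count_eq_card_filter_range, Nat.sub_add_cancel hn, ← cyclicNum,
    ← Nat.floor_natCast (R := ℝ) (cyclicNum n)] at hcount

theorem isAsymptoticallyProportional_cyclicNum :
    IsAsymptoticallyProportional fun n ↦ (cyclicNum n : ℝ) := fun ε hε ↦ by
  filter_upwards [tendsto_cyclicNum_atTop.eventually
    (eventually_abs_cyclicCount_sub_le (half_pos hε)), eventually_gt_atTop 0]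
    with n ⟨G, hG, hcount⟩ hn i hi
  obtain ⟨hi0, hin⟩ := Finset.mem_Icc.1 hi
  have hcount_i := hcount (cyclicNum i) (cyclicNum_mono hin)
  have hcount_n := hcount (cyclicNum n) le_rfl
  rw [cyclicCount_cyclicNum hi0] at hcount_i
  rw [cyclicCount_cyclicNum hn] at hcount_n
  have hn0 : (0 : ℝ) < n := by exact_mod_cast hn
  have hratio : (i / n : ℝ) ≤ 1 := div_le_one_of_le₀ (by exact_mod_cast hin) hn0.le
  refine le_of_mul_le_mul_right ?_ hG
  calc
    |(cyclicNum i : ℝ) - i / n * cyclicNum n| * G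
      = |i / n * (n - cyclicNum n * G) - (i - cyclicNum i * G)| := by
        rw [← abs_of_pos hG, ← abs_mul, abs_of_pos hG]
        congr 1
        field_simp
        ring
    _ ≤ i / n * |n - cyclicNum n * G| + |i - cyclicNum i * G| := by
      refine (abs_sub _ _).trans_eq ?_
      rw [abs_mul, abs_of_nonneg (show (0 : ℝ) ≤ i / n by positivity)]
    _ ≤ 1 * (ε / 2 * (cyclicNum n * G)) + ε / 2 * (cyclicNum n * G) := by gcongr
    _ = ε * cyclicNum n * G := by ring

end CyclicNum

theorem sum_pow_cyclicNum_isEquivalent (k : ℕ) (hk : 0 < k) :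
    (fun n : ℕ => ∑ j ∈ Finset.Icc 1 n, ((cyclicNum j : ℝ)) ^ k) ~[atTop]
      (fun n : ℕ => (n : ℝ) * (cyclicNum n : ℝ) ^ k / (k + 1)) :=
  isAsymptoticallyProportional_cyclicNum.sum_pow_isEquivalent k
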